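/- Let n ≥ 2, 0 < α < 1 and 0 < s ≤ 1/2. Suppose u ∈ 𝓛_{2s,α}(ℝⁿ×ℝ) is a distributional solution of ∂_t^α u + (-Δ)^s u = 0 in ℝⁿ×ℝ, i.e. ∫_ℝ ∫_{ℝⁿ} u(x,t)·[D_right^α φ(x,t) + (-Δ)^s φ(x,t)] dx dt = 0 for every real-valued Schwartz function φ on ℝⁿ×ℝ. Then u is equal almost everywhere to a constant. -/

import Mathlib

open MeasureTheory Set

/-- The normalization constant `C_α = 1/|Γ(-α)|` for the Marchaud fractional derivative. -/
noncomputable def Calpha (α : ℝ) : ℝ := 1 / |Real.Gamma (-α)|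

/-- The normalization constant `C_{n,s} = 4^s Γ(n/2+s)/(π^{n/2}|Γ(-s)|)` for the
fractional Laplacian. -/
noncomputable def Cns (n : ℕ) (s : ℝ) : ℝ :=
  (4 : ℝ) ^ s * Real.Gamma ((n : ℝ) / 2 + s) / (Real.pi ^ ((n : ℝ) / 2) * |Real.Gamma (-s)|)

/-- The right Marchaud fractional derivative of order `α` in the time variable:
`D_right^α φ(x,t) = C_α ∫_t^∞ (φ(x,t) - φ(x,τ))/(τ-t)^{1+α} dτ`. -/
noncomputable def marchaudRight {n : ℕ} (α : ℝ) (φ : EuclideanSpace ℝ (Fin n) × ℝ → ℝ)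
    (x : EuclideanSpace ℝ (Fin n)) (t : ℝ) : ℝ :=
  Calpha α * ∫ τ in Ioi t, (φ (x, t) - φ (x, τ)) / (τ - t) ^ (1 + α)

/-- The fractional Laplacian `(-Δ)^s` acting in the space variable:
`(-Δ)^s φ(x,t) = (C_{n,s}/2) ∫_{ℝⁿ} (2φ(x,t) - φ(x+y,t) - φ(x-y,t))/|y|^{n+2s} dy`. -/
noncomputable def fracLap {n : ℕ} (s : ℝ) (φ : EuclideanSpace ℝ (Fin n) × ℝ → ℝ)
    (x : EuclideanSpace ℝ (Fin n)) (t : ℝ) : ℝ :=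
  Cns n s / 2 * ∫ y : EuclideanSpace ℝ (Fin n),
    (2 * φ (x, t) - φ (x + y, t) - φ (x - y, t)) / ‖y‖ ^ ((n : ℝ) + 2 * s)

open scoped FourierTransform RealInnerProductSpace

/-- The character `θ ↦ exp (2πiθ)`, valued in `ℂ`. -/
noncomputable def unitExp (θ : ℝ) : ℂ := (Real.fourierChar θ : ℂ)

lemma unitExp_eq_exp (θ : ℝ) :
    unitExp θ = Complex.exp (Complex.I * ((2 * Real.pi * θ : ℝ) : ℂ)) := by
  rw [unitExp, Real.fourierChar_apply, mul_comm]

lemma unitExp_add (a b : ℝ) : unitExp (a + b) = unitExp a * unitExp b := by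
  simp [unitExp, AddChar.map_add_eq_mul]

@[simp] lemma unitExp_zero : unitExp 0 = 1 := by simp [unitExp]

@[simp] lemma norm_unitExp (θ : ℝ) : ‖unitExp θ‖ = 1 := Circle.norm_coe _

lemma continuous_unitExp : Continuous unitExp := by
  have : unitExp = fun θ : ℝ => Complex.exp (Complex.I * ((2 * Real.pi * θ : ℝ) : ℂ)) :=
    funext unitExp_eq_exp
  rw [this]; fun_prop

lemma unitExp_re (θ : ℝ) : (unitExp θ).re = Real.cos (2 * Real.pi * θ) := by
  rw [unitExp_eq_exp, mul_comm, Complex.exp_ofReal_mul_I_re]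

lemma unitExp_mul_neg (θ : ℝ) : unitExp θ * unitExp (-θ) = 1 := by
  rw [← unitExp_add]; simp

lemma norm_one_sub_unitExp_le (θ : ℝ) : ‖1 - unitExp θ‖ ≤ 2 * Real.pi * |θ| := by
  rw [norm_sub_rev, unitExp_eq_exp]
  refine Real.norm_exp_I_mul_ofReal_sub_one_le.trans ?_
  rw [Real.norm_eq_abs, abs_mul, abs_of_pos Real.two_pi_pos]

lemma norm_one_sub_unitExp_le_two (θ : ℝ) : ‖1 - unitExp θ‖ ≤ 2 := by
  refine (norm_sub_le _ _).trans ?_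
  rw [norm_unitExp]; norm_num

lemma two_sub_unitExp (θ : ℝ) :
    2 - unitExp θ - unitExp (-θ) = (1 - unitExp θ) * (1 - unitExp (-θ)) := by
  linear_combination -unitExp_mul_neg θ

lemma two_sub_unitExp_eq_cos (θ : ℝ) :
    2 - unitExp θ - unitExp (-θ) = ((2 - 2 * Real.cos (2 * Real.pi * θ) : ℝ) : ℂ) := by
  rw [unitExp_eq_exp, unitExp_eq_exp, mul_comm Complex.I, mul_comm Complex.I,
    Complex.exp_mul_I, Complex.exp_mul_I]
  push_cast
  rw [mul_neg, Complex.cos_neg, Complex.sin_neg]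
  ring

lemma norm_one_sub_unitExp_le_min (a y : ℝ) (hy : 0 < y) :
    ‖1 - unitExp (a * y)‖ ≤ 2 * Real.pi * (1 + |a|) * min 1 y := by
  have hpi := Real.pi_gt_three
  rcases le_total 1 y with h | h
  · rw [min_eq_left h]
    refine (norm_one_sub_unitExp_le_two _).trans ?_
    nlinarith [abs_nonneg a, mul_nonneg (abs_nonneg a) Real.pi_pos.le]
  · rw [min_eq_right h]
    refine (norm_one_sub_unitExp_le _).trans ?_
    rw [abs_mul, abs_of_pos hy]
    nlinarith [abs_nonneg a, mul_pos Real.pi_pos hy]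

lemma norm_two_sub_unitExp_le_min (θ a y : ℝ) (ha : 0 ≤ a) (hy : 0 ≤ y) (hθ : |θ| ≤ a * y) :
    ‖2 - unitExp θ - unitExp (-θ)‖ ≤ (2 * Real.pi * (1 + a)) ^ 2 * min 1 (y ^ 2) := by
  have hpi := Real.pi_gt_three
  rw [two_sub_unitExp, norm_mul]
  rcases le_total 1 (y ^ 2) with h | h
  · rw [min_eq_left h]
    have h1 := mul_le_mul (norm_one_sub_unitExp_le_two θ) (norm_one_sub_unitExp_le_two (-θ))
      (norm_nonneg _) zero_le_two
    have h2 : 2 ≤ 2 * Real.pi * (1 + a) := by nlinarith [mul_nonneg ha Real.pi_pos.le]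
    nlinarith
  · rw [min_eq_right h]
    have h0 : ∀ θ' : ℝ, |θ'| ≤ a * y → ‖1 - unitExp θ'‖ ≤ 2 * Real.pi * (1 + a) * y := by
      intro θ' h'
      refine (norm_one_sub_unitExp_le _).trans ?_
      have := mul_le_mul_of_nonneg_left h' Real.two_pi_pos.le
      nlinarith [mul_nonneg Real.pi_pos.le hy]
    have h1 := mul_le_mul (h0 θ hθ) (h0 (-θ) (by rwa [abs_neg])) (norm_nonneg _)
      (by positivity)
    calc _ ≤ _ := h1
      _ = _ := by ring

lemma integrableOn_min_one_pow_div_rpow {k : ℕ} {a : ℝ} (ha : 0 < a) (hak : a < k) :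
    IntegrableOn (fun y : ℝ => min 1 (y ^ k) / y ^ (1 + a)) (Ioi 0) := by
  rw [← Ioc_union_Ioi_eq_Ioi (zero_le_one' ℝ)]
  refine IntegrableOn.union ?_ ?_
  · have h : IntegrableOn (fun y : ℝ => y ^ ((k : ℝ) - (1 + a))) (Ioc 0 1) := by
      rw [← intervalIntegrable_iff_integrableOn_Ioc_of_le zero_le_one]
      exact intervalIntegral.intervalIntegrable_rpow' (by linarith)
    refine h.congr_fun (fun y hy => ?_) measurableSet_Ioc
    simp only
    rw [min_eq_right (pow_le_one₀ hy.1.le hy.2), Real.rpow_sub hy.1, Real.rpow_natCast]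
  · have h := integrableOn_Ioi_rpow_of_lt (a := -(1 + a)) (by linarith) one_pos
    refine h.congr_fun (fun y hy => ?_) measurableSet_Ioi
    have hy1 : (1 : ℝ) < y := hy
    simp only
    rw [min_eq_left (one_le_pow₀ hy1.le), Real.rpow_neg (by linarith), one_div]

section Kernel

variable {V : Type*} [NormedAddCommGroup V] [InnerProductSpace ℝ V] [FiniteDimensional ℝ V]
  [MeasurableSpace V] [BorelSpace V]

lemma integrable_min_one_sq_div_norm_rpow [Nontrivial V] {s : ℝ} (hs : 0 < s) (hs1 : s < 1) :
    Integrable (fun y : V =>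
      min 1 (‖y‖ ^ 2) / ‖y‖ ^ ((Module.finrank ℝ V : ℝ) + 2 * s)) := by
  refine (integrable_fun_norm_addHaar (volume : Measure V)
    (f := fun r : ℝ => min 1 (r ^ 2) / r ^ ((Module.finrank ℝ V : ℝ) + 2 * s))).2 ?_
  have h := integrableOn_min_one_pow_div_rpow (k := 2) (a := 2 * s) (by linarith)
    (by push_cast; linarith)
  refine h.congr_fun (fun y hy => ?_) measurableSet_Ioi
  have hy0 : (0 : ℝ) < y := hy
  have hd : 1 ≤ Module.finrank ℝ V := Module.finrank_pos
  have h1 : y ^ ((Module.finrank ℝ V : ℝ) + 2 * s)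
      = y ^ (Module.finrank ℝ V - 1) * y ^ (1 + 2 * s) := by
    rw [← Real.rpow_natCast, ← Real.rpow_add hy0]
    congr 1
    push_cast [Nat.cast_sub hd]
    ring
  simp only [smul_eq_mul]
  rw [h1]
  field_simp

/-- The Fourier symbol of the (unnormalized) Marchaud derivative. -/
noncomputable def marchaudSymbol (α τ : ℝ) : ℂ :=
  ∫ y in Ioi (0 : ℝ), (1 - unitExp (τ * y)) / ((y ^ (1 + α) : ℝ) : ℂ)

/-- The Fourier symbol of the (unnormalized) fractional Laplacian. -/
noncomputable def fracLapSymbol (s : ℝ) (ξ : V) : ℂ :=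
  ∫ y : V, (2 - unitExp ⟪ξ, y⟫ - unitExp (-⟪ξ, y⟫)) /
    ((‖y‖ ^ ((Module.finrank ℝ V : ℝ) + 2 * s) : ℝ) : ℂ)

lemma marchaudSymbol_scale (α : ℝ) {r : ℝ} (hr : 0 < r) (σ : ℝ) :
    marchaudSymbol α (r * σ) = ((r ^ α : ℝ) : ℂ) * marchaudSymbol α σ := by
  have h := MeasureTheory.integral_comp_mul_left_Ioi
    (fun y : ℝ => (1 - unitExp (σ * y)) / ((y ^ (1 + α) : ℝ) : ℂ)) 0 hr
  rw [mul_zero] at h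
  have h2 : marchaudSymbol α (r * σ) = ((r ^ (1 + α) : ℝ) : ℂ) *
      ∫ y in Ioi (0 : ℝ), (1 - unitExp (σ * (r * y))) / (((r * y) ^ (1 + α) : ℝ) : ℂ) := by
    rw [marchaudSymbol, ← integral_const_mul]
    refine setIntegral_congr_fun measurableSet_Ioi (fun y hy => ?_)
    have hy0 : (0 : ℝ) < y := hy
    rw [Real.mul_rpow hr.le hy0.le, Complex.ofReal_mul]
    have : ((r ^ (1 + α) : ℝ) : ℂ) ≠ 0 := by exact_mod_cast (Real.rpow_pos_of_pos hr _).ne'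
    rw [mul_left_comm σ, ← mul_assoc]
    field_simp
  rw [h2, h, marchaudSymbol, Real.rpow_add hr, Real.rpow_one, Complex.real_smul,
    Complex.ofReal_mul, Complex.ofReal_inv]
  have : (r : ℂ) ≠ 0 := by exact_mod_cast hr.ne'
  field_simp

lemma fracLapSymbol_scale (s : ℝ) {r : ℝ} (hr : 0 < r) (ξ : V) :
    fracLapSymbol s (r • ξ) = ((r ^ (2 * s) : ℝ) : ℂ) * fracLapSymbol s ξ := by
  have h := Measure.integral_comp_smul (volume : Measure V)
    (fun y : V => (2 - unitExp ⟪ξ, y⟫ - unitExp (-⟪ξ, y⟫)) /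
      ((‖y‖ ^ ((Module.finrank ℝ V : ℝ) + 2 * s) : ℝ) : ℂ)) r
  have h2 : fracLapSymbol s (r • ξ) = ((r ^ ((Module.finrank ℝ V : ℝ) + 2 * s) : ℝ) : ℂ) *
      ∫ y : V, (2 - unitExp ⟪ξ, r • y⟫ - unitExp (-⟪ξ, r • y⟫)) /
        ((‖r • y‖ ^ ((Module.finrank ℝ V : ℝ) + 2 * s) : ℝ) : ℂ) := by
    rw [fracLapSymbol, ← integral_const_mul]
    refine integral_congr_ae (Filter.Eventually.of_forall fun y => ?_)
    simp only
    rw [norm_smul, Real.norm_eq_abs, abs_of_pos hr, Real.mul_rpow hr.le (norm_nonneg _),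
      Complex.ofReal_mul, real_inner_smul_left, real_inner_smul_right]
    have : ((r ^ ((Module.finrank ℝ V : ℝ) + 2 * s) : ℝ) : ℂ) ≠ 0 := by
      exact_mod_cast (Real.rpow_pos_of_pos hr _).ne'
    field_simp
  rw [h2, h, fracLapSymbol, Real.rpow_add hr, Real.rpow_natCast, Complex.real_smul,
    abs_of_pos (by positivity), Complex.ofReal_mul, Complex.ofReal_inv]
  have : ((r ^ Module.finrank ℝ V : ℝ) : ℂ) ≠ 0 := by
    exact_mod_cast (pow_pos hr _).ne'
  field_simp

lemma fracLapSymbol_eq_of_norm_eq (s : ℝ) {ξ η : V} (h : ‖ξ‖ = ‖η‖) :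
    fracLapSymbol s ξ = fracLapSymbol s η := by
  set R := (Submodule.span ℝ {ξ - η})ᗮ.reflection with hR
  have hRξ : R ξ = η := Submodule.reflection_sub h
  have h1 := R.measurePreserving.integral_comp' (f := R.toMeasurableEquiv)
    (fun y : V => (2 - unitExp ⟪η, y⟫ - unitExp (-⟪η, y⟫)) /
      ((‖y‖ ^ ((Module.finrank ℝ V : ℝ) + 2 * s) : ℝ) : ℂ))
  rw [fracLapSymbol, fracLapSymbol, ← h1]
  refine integral_congr_ae (Filter.Eventually.of_forall fun y => ?_)
  simp [← hRξ, LinearIsometryEquiv.inner_map_map]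

end Kernel

lemma integrableOn_marchaudSymbol {α : ℝ} (hα0 : 0 < α) (hα1 : α < 1) (τ : ℝ) :
    IntegrableOn (fun y : ℝ => (1 - unitExp (τ * y)) / ((y ^ (1 + α) : ℝ) : ℂ)) (Ioi 0) := by
  have h := (integrableOn_min_one_pow_div_rpow (k := 1) hα0 (by simpa using hα1)).const_mul
    (2 * Real.pi * (1 + |τ|))
  have := continuous_unitExp.measurable
  refine h.mono' (Measurable.aestronglyMeasurable (by fun_prop)) ?_
  filter_upwards [ae_restrict_mem measurableSet_Ioi] with y hy
  have hy0 : (0 : ℝ) < y := hy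
  rw [norm_div, Complex.norm_real, Real.norm_of_nonneg (Real.rpow_nonneg hy0.le _), pow_one,
    mul_div_assoc']
  gcongr
  exact norm_one_sub_unitExp_le_min τ y hy0

lemma marchaudSymbol_re_pos {α : ℝ} (hα0 : 0 < α) (hα1 : α < 1) {τ : ℝ} (hτ : τ ≠ 0) :
    0 < (marchaudSymbol α τ).re := by
  have h_int := integrableOn_marchaudSymbol hα0 hα1 τ
  have hre : (marchaudSymbol α τ).re =
      ∫ y in Ioi (0 : ℝ), (1 - Real.cos (2 * Real.pi * (τ * y))) / y ^ (1 + α) := by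
    rw [marchaudSymbol]
    refine (integral_re h_int).symm.trans ?_
    refine integral_congr_ae (Filter.Eventually.of_forall fun y => ?_)
    simp [Complex.div_ofReal_re, unitExp_re]
  have h_int' : IntegrableOn
      (fun y : ℝ => (1 - Real.cos (2 * Real.pi * (τ * y))) / y ^ (1 + α)) (Ioi 0) := by
    refine h_int.re.congr (Filter.Eventually.of_forall fun y => ?_)
    simp [Complex.div_ofReal_re, unitExp_re]
  rw [hre, setIntegral_pos_iff_support_of_nonneg_ae _ h_int']
  · have hopen : IsOpen ({y : ℝ | Real.cos (2 * Real.pi * (τ * y)) < 1} ∩ Ioi 0) := by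
      refine IsOpen.inter (isOpen_lt ?_ continuous_const) isOpen_Ioi
      fun_prop
    refine (hopen.measure_pos volume ⟨1 / (2 * |τ|), ?_, ?_⟩).trans_le (measure_mono ?_)
    · rcases lt_or_gt_of_ne hτ with h | h
      · have : 2 * Real.pi * (τ * (1 / (2 * |τ|))) = -Real.pi := by
          rw [abs_of_neg h]; field_simp
        rw [mem_ofPred_eq, this]; simp
      · have : 2 * Real.pi * (τ * (1 / (2 * |τ|))) = Real.pi := by
          rw [abs_of_pos h]; field_simp
        rw [mem_ofPred_eq, this]; simp
    · have := abs_pos.2 hτ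
      simp only [mem_Ioi]; positivity
    · rintro y ⟨h1, h2⟩
      have h2' : (0 : ℝ) < y := h2
      exact ⟨(div_pos (sub_pos.2 h1) (Real.rpow_pos_of_pos h2' _)).ne', h2⟩
  · filter_upwards [ae_restrict_mem measurableSet_Ioi] with y hy
    have hy0 : (0 : ℝ) < y := hy
    exact div_nonneg (sub_nonneg.2 (Real.cos_le_one _)) (Real.rpow_nonneg hy0.le _)

lemma marchaudSymbol_contDiffAt (α : ℝ) {τ : ℝ} (hτ : τ ≠ 0) :
    ContDiffAt ℝ (⊤ : ℕ∞) (marchaudSymbol α) τ := by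
  rcases lt_or_gt_of_ne hτ with h | h
  · have h1 : ContDiffAt ℝ (⊤ : ℕ∞)
        (fun σ : ℝ => (((-σ) ^ α : ℝ) : ℂ) * marchaudSymbol α (-1)) τ := by
      refine ContDiffAt.mul (Complex.ofRealCLM.contDiff.contDiffAt.comp τ ?_) contDiffAt_const
      exact ContDiffAt.rpow_const_of_ne contDiffAt_id.neg (by simpa using hτ)
    refine h1.congr_of_eventuallyEq ?_
    filter_upwards [eventually_lt_nhds h] with σ hσ
    rw [← marchaudSymbol_scale α (neg_pos.2 hσ)]
    simp
  · have h1 : ContDiffAt ℝ (⊤ : ℕ∞)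
        (fun σ : ℝ => ((σ ^ α : ℝ) : ℂ) * marchaudSymbol α 1) τ := by
      refine ContDiffAt.mul (Complex.ofRealCLM.contDiff.contDiffAt.comp τ ?_) contDiffAt_const
      exact ContDiffAt.rpow_const_of_ne contDiffAt_id hτ
    refine h1.congr_of_eventuallyEq ?_
    filter_upwards [eventually_gt_nhds h] with σ hσ
    rw [← marchaudSymbol_scale α hσ]
    simp

section FracLap

variable {V : Type*} [NormedAddCommGroup V] [InnerProductSpace ℝ V] [FiniteDimensional ℝ V]
  [MeasurableSpace V] [BorelSpace V]

lemma integrable_fracLapSymbol [Nontrivial V] {s : ℝ} (hs : 0 < s) (hs1 : s < 1) (ξ : V) :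
    Integrable (fun y : V => (2 - unitExp ⟪ξ, y⟫ - unitExp (-⟪ξ, y⟫)) /
      ((‖y‖ ^ ((Module.finrank ℝ V : ℝ) + 2 * s) : ℝ) : ℂ)) := by
  have h := (integrable_min_one_sq_div_norm_rpow (V := V) hs hs1).const_mul
    ((2 * Real.pi * (1 + ‖ξ‖)) ^ 2)
  have := continuous_unitExp.measurable
  refine h.mono' (Measurable.aestronglyMeasurable (by fun_prop))
    (Filter.Eventually.of_forall fun y => ?_)
  rw [norm_div, Complex.norm_real, Real.norm_of_nonneg (by positivity), mul_div_assoc']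
  gcongr
  exact norm_two_sub_unitExp_le_min _ _ _ (norm_nonneg _) (norm_nonneg _)
    (abs_real_inner_le_norm ξ y)

lemma fracLapSymbol_eq_ofReal (s : ℝ) (ξ : V) :
    fracLapSymbol s ξ = ((∫ y : V, (2 - 2 * Real.cos (2 * Real.pi * ⟪ξ, y⟫)) /
      ‖y‖ ^ ((Module.finrank ℝ V : ℝ) + 2 * s) : ℝ) : ℂ) := by
  rw [fracLapSymbol, ← integral_complex_ofReal]
  refine integral_congr_ae (Filter.Eventually.of_forall fun y => ?_)
  simp only
  rw [two_sub_unitExp_eq_cos, Complex.ofReal_div]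

lemma fracLapSymbol_re_pos [Nontrivial V] {s : ℝ} (hs : 0 < s) (hs1 : s < 1) {ξ : V}
    (hξ : ξ ≠ 0) : 0 < (fracLapSymbol s ξ).re := by
  have h_int' : Integrable (fun y : V => (2 - 2 * Real.cos (2 * Real.pi * ⟪ξ, y⟫)) /
      ‖y‖ ^ ((Module.finrank ℝ V : ℝ) + 2 * s)) := by
    refine (integrable_fracLapSymbol hs hs1 ξ).re.congr (Filter.Eventually.of_forall fun y => ?_)
    simp only
    rw [two_sub_unitExp_eq_cos, ← Complex.ofReal_div]
    rfl
  rw [fracLapSymbol_eq_ofReal, Complex.ofReal_re, integral_pos_iff_support_of_nonneg _ h_int']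
  · have hopen : IsOpen ({y : V | Real.cos (2 * Real.pi * ⟪ξ, y⟫) < 1} ∩ {0}ᶜ) := by
      refine IsOpen.inter (isOpen_lt ?_ continuous_const) isOpen_compl_singleton
      fun_prop
    have hn := norm_pos_iff.2 hξ
    refine (hopen.measure_pos volume ⟨(1 / (2 * ‖ξ‖ ^ 2)) • ξ, ?_, ?_⟩).trans_le (measure_mono ?_)
    · have : 2 * Real.pi * ⟪ξ, (1 / (2 * ‖ξ‖ ^ 2)) • ξ⟫ = Real.pi := by
        rw [real_inner_smul_right, real_inner_self_eq_norm_sq]; field_simp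
      rw [mem_ofPred_eq, this]; simp
    · simp [hξ]
    · rintro y ⟨h1, h2⟩
      have h1' : Real.cos (2 * Real.pi * ⟪ξ, y⟫) < 1 := h1
      have h2' : 0 < ‖y‖ := norm_pos_iff.2 h2
      exact (div_pos (by linarith) (Real.rpow_pos_of_pos h2' _)).ne'
  · intro y
    have := Real.cos_le_one (2 * Real.pi * ⟪ξ, y⟫)
    exact div_nonneg (by linarith) (by positivity)

lemma fracLapSymbol_contDiffAt (s : ℝ) {ξ : V} (hξ : ξ ≠ 0) :
    ContDiffAt ℝ (⊤ : ℕ∞) (fracLapSymbol (V := V) s) ξ := by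
  have hn := norm_pos_iff.2 hξ
  set η : V := ‖ξ‖⁻¹ • ξ with hη
  have hη1 : ‖η‖ = 1 := by rw [hη, norm_smul, norm_inv, norm_norm, inv_mul_cancel₀ hn.ne']
  have h1 : ContDiffAt ℝ (⊤ : ℕ∞)
      (fun ζ : V => ((‖ζ‖ ^ (2 * s) : ℝ) : ℂ) * fracLapSymbol s η) ξ := by
    refine ContDiffAt.mul (Complex.ofRealCLM.contDiff.contDiffAt.comp ξ ?_) contDiffAt_const
    exact ContDiffAt.rpow_const_of_ne (contDiffAt_norm ℝ hξ) hn.ne'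
  refine h1.congr_of_eventuallyEq ?_
  filter_upwards [isOpen_compl_singleton.mem_nhds hξ] with ζ hζ
  rw [← fracLapSymbol_scale s (norm_pos_iff.2 hζ)]
  refine fracLapSymbol_eq_of_norm_eq s ?_
  rw [norm_smul, norm_norm, hη1, mul_one]

end FracLap

/-- Fubini for superpositions whose kernel is dominated by a product. -/
lemma integral_kernel_swap {Y Z : Type*} [MeasurableSpace Y] [MeasurableSpace Z]
    {ν : Measure Y} {μ : Measure Z} [SFinite ν] [SFinite μ] {k : Y → Z → ℂ} {Ψ : Z → ℂ}
    {M : Y → ℝ} {N : Z → ℝ} (hk : Measurable (Function.uncurry k))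
    (hΨ : AEStronglyMeasurable Ψ μ) (hM : Integrable M ν)
    (hN : Integrable (fun z => N z * ‖Ψ z‖) μ)
    (hb : ∀ᵐ y ∂ν, ∀ z, ‖k y z‖ ≤ M y * N z) :
    Integrable (fun y => ∫ z, k y z * Ψ z ∂μ) ν ∧
      ∫ y, ∫ z, k y z * Ψ z ∂μ ∂ν = ∫ z, (∫ y, k y z ∂ν) * Ψ z ∂μ ∧
      Integrable (fun z => (∫ y, k y z ∂ν) * Ψ z) μ := by
  have hI : Integrable (Function.uncurry fun y z => k y z * Ψ z) (ν.prod μ) := by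
    refine (hM.mul_prod hN).mono' (hk.aestronglyMeasurable.mul hΨ.comp_snd) ?_
    have hb' : ∀ᵐ p ∂ν.prod μ, ∀ z, ‖k p.1 z‖ ≤ M p.1 * N z :=
      Measure.quasiMeasurePreserving_fst.ae hb
    filter_upwards [hb'] with p hp
    simp only [Function.uncurry, norm_mul, ← mul_assoc]
    gcongr
    exact hp p.2
  refine ⟨hI.integral_prod_left, ?_, ?_⟩
  · rw [integral_integral_swap hI]
    simp_rw [integral_mul_const]
  · simpa only [Function.uncurry, integral_mul_const] using hI.integral_prod_right

/-- The unnormalized Marchaud derivative of a superposition of characters. -/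
lemma marchaud_superposition {Z : Type*} [MeasurableSpace Z] {μ : Measure Z} [SFinite μ]
    {α : ℝ} (hα0 : 0 < α) (hα1 : α < 1) {τ : Z → ℝ} (hτ : Measurable τ) {Ψ : Z → ℂ}
    (hΨ : Integrable Ψ μ) (hΨτ : Integrable (fun z => (1 + |τ z|) * ‖Ψ z‖) μ) (t : ℝ) :
    IntegrableOn (fun y : ℝ => ((∫ z, unitExp (τ z * t) * Ψ z ∂μ) -
        ∫ z, unitExp (τ z * (t + y)) * Ψ z ∂μ) / ((y ^ (1 + α) : ℝ) : ℂ)) (Ioi 0) ∧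
    ∫ y in Ioi (0 : ℝ), ((∫ z, unitExp (τ z * t) * Ψ z ∂μ) -
        ∫ z, unitExp (τ z * (t + y)) * Ψ z ∂μ) / ((y ^ (1 + α) : ℝ) : ℂ)
      = ∫ z, unitExp (τ z * t) * (marchaudSymbol α (τ z) * Ψ z) ∂μ ∧
    Integrable (fun z => unitExp (τ z * t) * (marchaudSymbol α (τ z) * Ψ z)) μ := by
  have hc := continuous_unitExp.measurable
  have hmeas : ∀ r : ℝ, Measurable fun z => unitExp (τ z * r) := fun r => by fun_prop
  have h_int : ∀ r : ℝ, Integrable (fun z => unitExp (τ z * r) * Ψ z) μ := fun r =>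
    hΨ.bdd_mul (hmeas r).aestronglyMeasurable (c := 1)
      (Filter.Eventually.of_forall fun z => (norm_unitExp _).le)
  have key := integral_kernel_swap (ν := volume.restrict (Ioi (0 : ℝ))) (μ := μ)
    (k := fun y z => (1 - unitExp (τ z * y)) / ((y ^ (1 + α) : ℝ) : ℂ))
    (Ψ := fun z => unitExp (τ z * t) * Ψ z)
    (M := fun y => min 1 (y ^ 1) / y ^ (1 + α)) (N := fun z => 2 * Real.pi * (1 + |τ z|))
    (by simp only [Function.uncurry_def]; fun_prop)
    ((hmeas t).aestronglyMeasurable.mul hΨ.aestronglyMeasurable)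
    (integrableOn_min_one_pow_div_rpow (k := 1) hα0 (by simpa using hα1))
    (by simpa only [norm_mul, norm_unitExp, one_mul, mul_assoc] using hΨτ.const_mul (2 * Real.pi))
    (by
      filter_upwards [ae_restrict_mem measurableSet_Ioi] with y hy z
      have hy0 : (0 : ℝ) < y := hy
      rw [norm_div, Complex.norm_real, Real.norm_of_nonneg (Real.rpow_nonneg hy0.le _), pow_one,
        div_mul_eq_mul_div, mul_comm (min 1 y)]
      gcongr
      exact norm_one_sub_unitExp_le_min (τ z) y hy0)
  have hrw : ∀ y : ℝ, ((∫ z, unitExp (τ z * t) * Ψ z ∂μ) -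
      ∫ z, unitExp (τ z * (t + y)) * Ψ z ∂μ) / ((y ^ (1 + α) : ℝ) : ℂ) =
      ∫ z, (1 - unitExp (τ z * y)) / ((y ^ (1 + α) : ℝ) : ℂ) * (unitExp (τ z * t) * Ψ z) ∂μ := by
    intro y
    rw [← integral_sub (h_int _) (h_int _), ← integral_div]
    refine integral_congr_ae (Filter.Eventually.of_forall fun z => ?_)
    simp only
    rw [mul_add, unitExp_add]
    ring
  simp_rw [hrw]
  refine ⟨key.1, key.2.1.trans (integral_congr_ae (Filter.Eventually.of_forall fun z => ?_)),
    key.2.2.congr (Filter.Eventually.of_forall fun z => ?_)⟩ <;>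
  · simp only [marchaudSymbol]
    ring

/-- The unnormalized fractional Laplacian of a superposition of characters. -/
lemma fracLap_superposition {V : Type*} [NormedAddCommGroup V] [InnerProductSpace ℝ V]
    [FiniteDimensional ℝ V] [MeasurableSpace V] [BorelSpace V] [Nontrivial V]
    {Z : Type*} [MeasurableSpace Z] {μ : Measure Z} [SFinite μ]
    {s : ℝ} (hs0 : 0 < s) (hs1 : s < 1) {ξ : Z → V} (hξ : Measurable ξ) {Ψ : Z → ℂ}
    (hΨ : Integrable Ψ μ) (hΨξ : Integrable (fun z => (1 + ‖ξ z‖) ^ 2 * ‖Ψ z‖) μ) (x : V) :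
    Integrable (fun y : V => (2 * (∫ z, unitExp ⟪ξ z, x⟫ * Ψ z ∂μ) -
        (∫ z, unitExp ⟪ξ z, x + y⟫ * Ψ z ∂μ) - ∫ z, unitExp ⟪ξ z, x - y⟫ * Ψ z ∂μ) /
        ((‖y‖ ^ ((Module.finrank ℝ V : ℝ) + 2 * s) : ℝ) : ℂ)) ∧
    ∫ y : V, (2 * (∫ z, unitExp ⟪ξ z, x⟫ * Ψ z ∂μ) -
        (∫ z, unitExp ⟪ξ z, x + y⟫ * Ψ z ∂μ) - ∫ z, unitExp ⟪ξ z, x - y⟫ * Ψ z ∂μ) /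
        ((‖y‖ ^ ((Module.finrank ℝ V : ℝ) + 2 * s) : ℝ) : ℂ)
      = ∫ z, unitExp ⟪ξ z, x⟫ * (fracLapSymbol s (ξ z) * Ψ z) ∂μ ∧
    Integrable (fun z => unitExp ⟪ξ z, x⟫ * (fracLapSymbol s (ξ z) * Ψ z)) μ := by
  have hc := continuous_unitExp.measurable
  have hmeas : ∀ r : V, Measurable fun z => unitExp ⟪ξ z, r⟫ := fun r => by fun_prop
  have h_int : ∀ r : V, Integrable (fun z => unitExp ⟪ξ z, r⟫ * Ψ z) μ := fun r =>
    hΨ.bdd_mul (hmeas r).aestronglyMeasurable (c := 1)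
      (Filter.Eventually.of_forall fun z => (norm_unitExp _).le)
  have key := integral_kernel_swap (ν := (volume : Measure V)) (μ := μ)
    (k := fun y z => (2 - unitExp ⟪ξ z, y⟫ - unitExp (-⟪ξ z, y⟫)) /
      ((‖y‖ ^ ((Module.finrank ℝ V : ℝ) + 2 * s) : ℝ) : ℂ))
    (Ψ := fun z => unitExp ⟪ξ z, x⟫ * Ψ z)
    (M := fun y => min 1 (‖y‖ ^ 2) / ‖y‖ ^ ((Module.finrank ℝ V : ℝ) + 2 * s))
    (N := fun z => (2 * Real.pi) ^ 2 * (1 + ‖ξ z‖) ^ 2)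
    (by simp only [Function.uncurry_def]; fun_prop)
    ((hmeas x).aestronglyMeasurable.mul hΨ.aestronglyMeasurable)
    (integrable_min_one_sq_div_norm_rpow hs0 hs1)
    (by simpa only [norm_mul, norm_unitExp, one_mul, mul_assoc] using
      hΨξ.const_mul ((2 * Real.pi) ^ 2))
    (by
      refine Filter.Eventually.of_forall fun y z => ?_
      rw [norm_div, Complex.norm_real, Real.norm_of_nonneg (by positivity),
        div_mul_eq_mul_div, mul_comm (min 1 (‖y‖ ^ 2)), ← mul_pow]
      gcongr
      exact norm_two_sub_unitExp_le_min _ _ _ (norm_nonneg _) (norm_nonneg _)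
        (abs_real_inner_le_norm (ξ z) y))
  have hrw : ∀ y : V, (2 * (∫ z, unitExp ⟪ξ z, x⟫ * Ψ z ∂μ) -
        (∫ z, unitExp ⟪ξ z, x + y⟫ * Ψ z ∂μ) - ∫ z, unitExp ⟪ξ z, x - y⟫ * Ψ z ∂μ) /
        ((‖y‖ ^ ((Module.finrank ℝ V : ℝ) + 2 * s) : ℝ) : ℂ) =
      ∫ z, (2 - unitExp ⟪ξ z, y⟫ - unitExp (-⟪ξ z, y⟫)) /
        ((‖y‖ ^ ((Module.finrank ℝ V : ℝ) + 2 * s) : ℝ) : ℂ) * (unitExp ⟪ξ z, x⟫ * Ψ z) ∂μ := by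
    intro y
    rw [← integral_const_mul, ← integral_sub ((h_int _).const_mul _) (h_int _),
      ← integral_sub (f := fun z => 2 * (unitExp ⟪ξ z, x⟫ * Ψ z) - unitExp ⟪ξ z, x + y⟫ * Ψ z)
        (((h_int _).const_mul _).sub (h_int _)) (h_int _), ← integral_div]
    refine integral_congr_ae (Filter.Eventually.of_forall fun z => ?_)
    simp only
    rw [inner_add_right, unitExp_add, inner_sub_right, sub_eq_add_neg ⟪ξ z, x⟫, unitExp_add]
    ring
  simp_rw [hrw]
  refine ⟨key.1, key.2.1.trans (integral_congr_ae (Filter.Eventually.of_forall fun z => ?_)),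
    key.2.2.congr (Filter.Eventually.of_forall fun z => ?_)⟩ <;>
  · simp only [fracLapSymbol]
    ring

section Spectral

lemma SchwartzMap.exists_norm_le_div {E F : Type*} [NormedAddCommGroup E] [NormedSpace ℝ E]
    [NormedAddCommGroup F] [NormedSpace ℝ F] (f : SchwartzMap E F) (N : ℕ) :
    ∃ C, 0 ≤ C ∧ ∀ x, ‖f x‖ ≤ C / (1 + ‖x‖) ^ N := by
  refine ⟨2 ^ N * ((Finset.Iic (N, 0)).sup fun m => SchwartzMap.seminorm ℝ m.1 m.2) f,
    by positivity, fun x => ?_⟩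
  rw [le_div_iff₀ (by positivity), mul_comm]
  simpa using SchwartzMap.one_add_le_sup_seminorm_apply (𝕜 := ℝ) (m := (N, 0)) le_rfl le_rfl f x

lemma one_add_norm_le_mul {E : Type*} [NormedAddCommGroup E] {x p y : E} (h : ‖x - p‖ ≤ ‖y‖) :
    1 + ‖x‖ ≤ (1 + ‖p‖) * (1 + ‖y‖) := by
  have h1 : ‖x‖ ≤ ‖p‖ + ‖x - p‖ := by
    simpa using norm_add_le p (x - p)
  nlinarith [norm_nonneg p, norm_nonneg y]

variable {V : Type*} [NormedAddCommGroup V] [InnerProductSpace ℝ V]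

/-- Smooth compactly supported functions. -/
structure IsTest {W : Type*} [NormedAddCommGroup W] [NormedSpace ℝ W] (Φ : W → ℂ) : Prop where
  contDiff : ContDiff ℝ (⊤ : ℕ∞) Φ
  hasCompactSupport : HasCompactSupport Φ

/-- Smooth compactly supported functions that vanish near the origin. -/
structure IsPuncturedTest (Φ : V → ℂ) : Prop extends IsTest Φ where
  eventually_eq_zero : ∀ᶠ ξ in nhds 0, Φ ξ = 0

/-- A smooth cutoff function which equals one near the origin. -/
noncomputable def cutoff (ξ : V) : ℂ :=
  (((⟨1, 2, one_pos, one_lt_two⟩ : ContDiffBump (0 : V)) ξ : ℝ) : ℂ)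

lemma cutoff_eq_one {ξ : V} (h : ‖ξ‖ ≤ 1) : cutoff ξ = 1 := by
  rw [cutoff, ContDiffBump.one_of_mem_closedBall]
  · simp
  · simpa using h

variable [FiniteDimensional ℝ V]

lemma isTest_cutoff : IsTest (cutoff (V := V)) where
  contDiff := Complex.ofRealCLM.contDiff.comp (ContDiffBump.contDiff _)
  hasCompactSupport := (ContDiffBump.hasCompactSupport _).comp_left Complex.ofReal_zero

variable [MeasurableSpace V] [BorelSpace V]

/-- The inverse Fourier integral of `Φ`, as a superposition of characters. -/
noncomputable def charIntegral (Φ : V → ℂ) (x : V) : ℂ := ∫ ξ, unitExp ⟪ξ, x⟫ * Φ ξ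

lemma charIntegral_eq_fourierInv (Φ : V → ℂ) : charIntegral Φ = 𝓕⁻ Φ := by
  ext x
  rw [charIntegral, Real.fourierInv_eq]
  rfl

lemma IsTest.exists_schwartz {Φ : V → ℂ} (h : IsTest Φ) :
    ∃ f : SchwartzMap V ℂ, ⇑f = charIntegral Φ ∧ ⇑(𝓕 f : SchwartzMap V ℂ) = Φ := by
  refine ⟨𝓕⁻ (h.hasCompactSupport.toSchwartzMap h.contDiff), ?_, ?_⟩
  · rw [SchwartzMap.fourierInv_coe, charIntegral_eq_fourierInv]
    rfl
  · rw [FourierTransform.fourier_fourierInv_eq]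
    rfl

lemma SchwartzMap.integral_eq_fourier_zero (f : SchwartzMap V ℂ) : ∫ x, f x = 𝓕 f 0 := by
  rw [SchwartzMap.fourier_coe, Real.fourier_eq]
  simp

lemma SchwartzMap.integrable_one_add_norm_pow_mul (f : SchwartzMap V ℂ) (N : ℕ) :
    Integrable (fun x => (1 + ‖x‖) ^ N * ‖f x‖) := by
  obtain ⟨C, hC, hf⟩ := SchwartzMap.exists_norm_le_div f (N + (Module.finrank ℝ V + 1))
  have h := (integrable_one_add_norm (E := V) (μ := volume)
    (r := ((Module.finrank ℝ V + 1 : ℕ) : ℝ)) (by push_cast; linarith)).const_mul C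
  refine h.mono' (by have := f.continuous; fun_prop) (Filter.Eventually.of_forall fun x => ?_)
  have hx : 0 < 1 + ‖x‖ := by positivity
  rw [Real.norm_of_nonneg (by positivity), Real.rpow_neg hx.le, Real.rpow_natCast]
  calc (1 + ‖x‖) ^ N * ‖f x‖
      ≤ (1 + ‖x‖) ^ N * (C / (1 + ‖x‖) ^ (N + (Module.finrank ℝ V + 1))) := by
        gcongr; exact hf x
    _ = _ := by rw [pow_add]; field_simp

/-- Frequency truncation acts as a convolution. -/
lemma charIntegral_fourier_mul_cutoff (h X : SchwartzMap V ℂ) (hX : ⇑(𝓕 X : SchwartzMap V ℂ) = cutoff)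
    (R : ℝ) (x : V) :
    charIntegral (fun ξ => 𝓕 h ξ * cutoff (R⁻¹ • ξ)) x = ∫ z, X z * h (x - R⁻¹ • z) := by
  have hc := continuous_unitExp
  have hXc := X.continuous
  have hhc := (𝓕 h).continuous
  have hcut : ∀ ξ : V, cutoff (R⁻¹ • ξ) = ∫ z, unitExp (-⟪z, R⁻¹ • ξ⟫) * X z := by
    intro ξ
    rw [← hX, SchwartzMap.fourier_coe, Real.fourier_eq]
    rfl
  have hh : ∀ p : V, h p = ∫ ξ, unitExp ⟪ξ, p⟫ * 𝓕 h ξ := by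
    intro p
    have h1 : ⇑(𝓕⁻ (𝓕 h) : SchwartzMap V ℂ) = charIntegral ⇑(𝓕 h : SchwartzMap V ℂ) := by
      rw [charIntegral_eq_fourierInv, SchwartzMap.fourierInv_coe]
    rw [FourierTransform.fourierInv_fourier_eq] at h1
    rw [h1]
    rfl
  have hI : Integrable (Function.uncurry fun ξ z =>
      (unitExp ⟪ξ, x⟫ * unitExp (-⟪z, R⁻¹ • ξ⟫)) * (𝓕 h ξ * X z))
      ((volume : Measure V).prod volume) := by
    refine ((𝓕 h).integrable.mul_prod X.integrable).bdd_mul (c := 1) ?_ ?_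
    · exact Continuous.aestronglyMeasurable (by fun_prop)
    · exact Filter.Eventually.of_forall fun p => by simp
  calc charIntegral (fun ξ => 𝓕 h ξ * cutoff (R⁻¹ • ξ)) x
      = ∫ ξ, ∫ z, (unitExp ⟪ξ, x⟫ * unitExp (-⟪z, R⁻¹ • ξ⟫)) * (𝓕 h ξ * X z) := by
        refine integral_congr_ae (Filter.Eventually.of_forall fun ξ => ?_)
        simp only
        rw [hcut, ← integral_const_mul, ← integral_const_mul]
        refine integral_congr_ae (Filter.Eventually.of_forall fun z => ?_)
        simp only
        ring
    _ = ∫ z, ∫ ξ, (unitExp ⟪ξ, x⟫ * unitExp (-⟪z, R⁻¹ • ξ⟫)) * (𝓕 h ξ * X z) :=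
        integral_integral_swap hI
    _ = ∫ z, X z * h (x - R⁻¹ • z) := by
        refine integral_congr_ae (Filter.Eventually.of_forall fun z => ?_)
        simp only
        rw [hh, ← integral_const_mul]
        refine integral_congr_ae (Filter.Eventually.of_forall fun ξ => ?_)
        simp only
        rw [inner_sub_right, sub_eq_add_neg, unitExp_add, real_inner_smul_right,
          real_inner_smul_right, real_inner_comm ξ z]
        ring

lemma integral_mul_comp_sub_smul_bound (h X : SchwartzMap V ℂ) (N : ℕ) :
    ∃ C, 0 ≤ C ∧ ∀ R : ℝ, 1 ≤ R → ∀ x : V,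
      ‖∫ z, X z * h (x - R⁻¹ • z)‖ ≤ C / (1 + ‖x‖) ^ N := by
  obtain ⟨C, hC, hh⟩ := SchwartzMap.exists_norm_le_div h N
  have hXi := X.integrable_one_add_norm_pow_mul N
  refine ⟨C * ∫ z, (1 + ‖z‖) ^ N * ‖X z‖, by positivity, fun R hR x => ?_⟩
  have hR0 : 0 < R := by linarith
  rw [mul_div_right_comm, ← integral_const_mul]
  refine norm_integral_le_of_norm_le (hXi.const_mul _) (Filter.Eventually.of_forall fun z => ?_)
  rw [norm_mul]
  have h1 : 1 + ‖x‖ ≤ (1 + ‖x - R⁻¹ • z‖) * (1 + ‖z‖) := by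
    refine one_add_norm_le_mul ?_
    rw [sub_sub_cancel, norm_smul, Real.norm_of_nonneg (inv_nonneg.2 hR0.le)]
    exact mul_le_of_le_one_left (norm_nonneg _) (inv_le_one_of_one_le₀ hR)
  have h2 : ‖h (x - R⁻¹ • z)‖ ≤ C / (1 + ‖x‖) ^ N * (1 + ‖z‖) ^ N := by
    refine (hh _).trans ?_
    rw [div_mul_eq_mul_div, div_le_div_iff₀ (by positivity) (by positivity), mul_assoc,
      ← mul_pow, mul_comm (1 + ‖z‖)]
    gcongr
  calc ‖X z‖ * ‖h (x - R⁻¹ • z)‖ ≤ ‖X z‖ * (C / (1 + ‖x‖) ^ N * (1 + ‖z‖) ^ N) := by gcongr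
    _ = _ := by ring

lemma tendsto_integral_mul_comp_sub_smul (h X : SchwartzMap V ℂ) (hX : ∫ z, X z = 1) (x : V) :
    Filter.Tendsto (fun k : ℕ => ∫ z, X z * h (x - ((k : ℝ) + 1)⁻¹ • z)) Filter.atTop
      (nhds (h x)) := by
  obtain ⟨C, hC, hh⟩ := SchwartzMap.exists_norm_le_div h 0
  have hc := X.continuous
  have hhc := h.continuous
  have h1 : h x = ∫ z, X z * h x := by rw [integral_mul_const, hX, one_mul]
  rw [h1]
  refine tendsto_integral_of_dominated_convergence (fun z => ‖X z‖ * C) (fun k => ?_)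
    (X.integrable.norm.mul_const C) (fun k => Filter.Eventually.of_forall fun z => ?_)
    (Filter.Eventually.of_forall fun z => ?_)
  · exact Continuous.aestronglyMeasurable (by fun_prop)
  · rw [norm_mul]
    gcongr
    simpa using hh (x - ((k : ℝ) + 1)⁻¹ • z)
  · refine Filter.Tendsto.const_mul _ ((hhc.tendsto x).comp ?_)
    have h2 : Filter.Tendsto (fun k : ℕ => ((k : ℝ) + 1)⁻¹) Filter.atTop (nhds 0) := by
      simpa using tendsto_one_div_add_atTop_nhds_zero_nat (𝕜 := ℝ)
    simpa using (h2.smul_const z).const_sub x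

lemma integral_mul_comp_sub_smul_low (h X : SchwartzMap V ℂ) (hh : ∫ y, h y = 0) :
    ∃ C, 0 ≤ C ∧ ∀ ε : ℝ, 0 < ε → ε ≤ 1 → ∀ x : V,
      ‖∫ z, X z * h (x - ε⁻¹ • z)‖ ≤
        C * ε ^ (Module.finrank ℝ V + 1) / (1 + ε * ‖x‖) ^ (Module.finrank ℝ V + 1) := by
  set d := Module.finrank ℝ V with hd
  obtain ⟨K, hK, hX⟩ := SchwartzMap.exists_norm_le_div (SchwartzMap.fderivCLM ℝ V ℂ X) (d + 1)
  simp only [SchwartzMap.fderivCLM_apply] at hX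
  have hhi := h.integrable_one_add_norm_pow_mul (d + 2)
  refine ⟨K * ∫ y, (1 + ‖y‖) ^ (d + 2) * ‖h y‖, by positivity, fun ε hε hε1 x => ?_⟩
  have hXc := X.continuous
  have hhc := h.continuous
  have e1 : ∫ z, X z * h (x - ε⁻¹ • z) = (ε ^ d : ℝ) • ∫ y, X (ε • (x - y)) * h y := by
    have h1 := Measure.integral_comp_smul (volume : Measure V)
      (fun z => X z * h (x - ε⁻¹ • z)) ε
    rw [← hd, abs_of_pos (by positivity)] at h1
    have h2 := integral_sub_left_eq_self (fun y => X (ε • (x - y)) * h y) volume x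
    rw [← h2]
    simp only [sub_sub_cancel]
    simp only [inv_smul_smul₀ hε.ne'] at h1
    rw [h1, smul_smul, mul_inv_cancel₀ (by positivity), one_smul]
  have hi1 : Integrable fun y => X (ε • (x - y)) * h y := by
    obtain ⟨C, hC, hXb⟩ := SchwartzMap.exists_norm_le_div X 0
    refine h.integrable.bdd_mul (c := C) (Continuous.aestronglyMeasurable (by fun_prop))
      (Filter.Eventually.of_forall fun y => by simpa using hXb (ε • (x - y)))
  have e2 : ∫ y, X (ε • (x - y)) * h y = ∫ y, (X (ε • (x - y)) - X (ε • x)) * h y := by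
    simp_rw [sub_mul]
    rw [integral_sub hi1 (h.integrable.const_mul _), integral_const_mul, hh, mul_zero, sub_zero]
  have hdiff : ∀ y, ‖X (ε • (x - y)) - X (ε • x)‖ ≤
      K * (1 + ‖y‖) ^ (d + 1) / (1 + ε * ‖x‖) ^ (d + 1) * (ε * ‖y‖) := by
    intro y
    have hny : ‖ε • (x - y) - ε • x‖ = ε * ‖y‖ := by
      rw [← smul_sub, sub_sub_cancel_left, norm_smul, norm_neg, Real.norm_of_nonneg hε.le]
    rw [← hny]
    refine Convex.norm_image_sub_le_of_norm_fderiv_le (𝕜 := ℝ)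
      (s := Metric.closedBall (ε • x) (ε * ‖y‖)) (fun p _ => X.differentiableAt) (fun p hp => ?_)
      (convex_closedBall _ _) ?_ ?_
    · refine (hX p).trans ?_
      have h3 : 1 + ‖ε • x‖ ≤ (1 + ‖p‖) * (1 + ‖y‖) := by
        refine one_add_norm_le_mul ?_
        rw [mem_closedBall_iff_norm'] at hp
        exact hp.trans (mul_le_of_le_one_left (norm_nonneg _) hε1)
      rw [norm_smul, Real.norm_of_nonneg hε.le] at h3
      rw [div_le_div_iff₀ (by positivity) (by positivity), mul_assoc, ← mul_pow,
        mul_comm (1 + ‖y‖)]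
      gcongr
    · exact Metric.mem_closedBall_self (by positivity)
    · rw [mem_closedBall_iff_norm, hny]
  rw [e1, e2, norm_smul, Real.norm_of_nonneg (by positivity)]
  have hfin : ‖∫ y, (X (ε • (x - y)) - X (ε • x)) * h y‖ ≤
      ∫ y, K * ε / (1 + ε * ‖x‖) ^ (d + 1) * ((1 + ‖y‖) ^ (d + 2) * ‖h y‖) := by
    refine norm_integral_le_of_norm_le (hhi.const_mul _) (Filter.Eventually.of_forall fun y => ?_)
    rw [norm_mul]
    calc ‖X (ε • (x - y)) - X (ε • x)‖ * ‖h y‖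
        ≤ K * (1 + ‖y‖) ^ (d + 1) / (1 + ε * ‖x‖) ^ (d + 1) * (ε * (1 + ‖y‖)) * ‖h y‖ := by
          gcongr
          refine (hdiff y).trans ?_
          gcongr
          linarith
      _ = _ := by rw [pow_succ _ (d + 1)]; ring
  rw [integral_const_mul] at hfin
  calc _ ≤ ε ^ d * (K * ε / (1 + ε * ‖x‖) ^ (d + 1) * ∫ y, (1 + ‖y‖) ^ (d + 2) * ‖h y‖) := by
        gcongr
    _ = _ := by rw [pow_succ ε]; ring

end Spectral

lemma Integrable.mul_of_norm_le_weight {X : Type*} [MeasurableSpace X] {μ : Measure X}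
    {w : X → ℝ} {v k : X → ℂ} (hw : ∀ x, 0 < w x) (hwm : Measurable w)
    (hv : Integrable (fun x => w x • v x) μ) (hk : AEStronglyMeasurable k μ) {C : ℝ}
    (hkC : ∀ x, ‖k x‖ ≤ C * w x) : Integrable (fun x => v x * k x) μ := by
  have h1 : Integrable (fun x => ((w x)⁻¹ • k x) * (w x • v x)) μ := by
    refine hv.bdd_mul (c := C) (hwm.inv.aestronglyMeasurable.smul hk)
      (Filter.Eventually.of_forall fun x => ?_)
    rw [norm_smul, norm_inv, Real.norm_of_nonneg (hw x).le, inv_mul_le_iff₀ (hw x), mul_comm]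
    exact hkC x
  refine h1.congr (Filter.Eventually.of_forall fun x => ?_)
  have hx : ((w x : ℝ) : ℂ) ≠ 0 := by exact_mod_cast (hw x).ne'
  simp only [Complex.real_smul, Complex.ofReal_inv]
  field_simp

lemma IsTest.mul_left {W : Type*} [NormedAddCommGroup W] [NormedSpace ℝ W] {Φ Ψ : W → ℂ}
    (hΨ : IsTest Ψ) (hΦ : ContDiff ℝ (⊤ : ℕ∞) Φ) : IsTest fun ξ => Φ ξ * Ψ ξ where
  contDiff := hΦ.mul hΨ.contDiff
  hasCompactSupport := hΨ.hasCompactSupport.mul_left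

lemma IsTest.integrable {W : Type*} [NormedAddCommGroup W] [NormedSpace ℝ W] [MeasurableSpace W]
    [BorelSpace W] {μ : Measure W} [IsFiniteMeasureOnCompacts μ] {Φ : W → ℂ} (h : IsTest Φ) :
    Integrable Φ μ :=
  h.contDiff.continuous.integrable_of_hasCompactSupport h.hasCompactSupport

section Decay

variable {V : Type*} [NormedAddCommGroup V] [InnerProductSpace ℝ V]

/-- The integrable weight `(1 + ‖x‖) ^ (-(d + 1))` on a space of dimension `d`. -/
noncomputable def decayWeight (x : V) : ℝ := ((1 + ‖x‖) ^ (Module.finrank ℝ V + 1))⁻¹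

lemma decayWeight_pos (x : V) : 0 < decayWeight x := by unfold decayWeight; positivity

lemma continuous_decayWeight : Continuous (decayWeight (V := V)) := by
  unfold decayWeight
  exact Continuous.inv₀ (by fun_prop) fun x => by positivity

lemma SchwartzMap.exists_norm_le_decayWeight {F : Type*} [NormedAddCommGroup F] [NormedSpace ℝ F]
    (f : SchwartzMap V F) : ∃ C, ∀ x, ‖f x‖ ≤ C * decayWeight x := by
  obtain ⟨C, -, hC⟩ := f.exists_norm_le_div (Module.finrank ℝ V + 1)
  exact ⟨C, hC⟩

variable [FiniteDimensional ℝ V]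

lemma isTest_cutoff_smul {r : ℝ} (hr : r ≠ 0) : IsTest fun ξ : V => cutoff (r • ξ) where
  contDiff := isTest_cutoff.contDiff.comp (contDiff_const_smul r)
  hasCompactSupport := isTest_cutoff.hasCompactSupport.comp_smul hr

variable [MeasurableSpace V] [BorelSpace V]

lemma integrable_decayWeight : Integrable (decayWeight (V := V)) := by
  have h := integrable_one_add_norm (E := V) (μ := volume)
    (r := ((Module.finrank ℝ V + 1 : ℕ) : ℝ)) (by push_cast; linarith)
  refine h.congr (Filter.Eventually.of_forall fun x => ?_)
  simp only
  rw [Real.rpow_neg (by positivity), Real.rpow_natCast, decayWeight]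

lemma SchwartzMap.integrable_mul_of_decayWeight {v : V → ℂ} (hv : Integrable fun x => decayWeight x • v x)
    (f : SchwartzMap V ℂ) : Integrable fun x => v x * f x := by
  obtain ⟨C, hC⟩ := f.exists_norm_le_decayWeight
  exact Integrable.mul_of_norm_le_weight decayWeight_pos continuous_decayWeight.measurable hv
    f.continuous.aestronglyMeasurable hC

lemma locallyIntegrable_of_decayWeight {v : V → ℂ} (hv : Integrable fun x => decayWeight x • v x) :
    LocallyIntegrable v := by
  have h := hv.locallyIntegrable.continuous_smul (g := fun x => (decayWeight x)⁻¹)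
    (continuous_decayWeight.inv₀ fun x => (decayWeight_pos x).ne')
  refine h.congr (Filter.Eventually.of_forall fun x => ?_)
  simp only [inv_smul_smul₀ (decayWeight_pos x).ne']

lemma IsTest.integrable_charIntegral {Φ : V → ℂ} (h : IsTest Φ) (x : V) :
    Integrable fun ξ => unitExp ⟪ξ, x⟫ * Φ ξ :=
  h.integrable.bdd_mul (c := 1)
    (continuous_unitExp.comp (by fun_prop)).aestronglyMeasurable
    (Filter.Eventually.of_forall fun p => by simp)

lemma integral_mul_eq_zero_of_puncturedTest {v : V → ℂ}
    (hv : Integrable fun x => decayWeight x • v x)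
    (h0 : ∀ Φ : V → ℂ, IsPuncturedTest Φ → ∫ x, v x * charIntegral Φ x = 0)
    (h : SchwartzMap V ℂ) (hh : ∫ x, h x = 0) : ∫ x, v x * h x = 0 := by
  obtain ⟨X, hXc, hX⟩ := (isTest_cutoff (V := V)).exists_schwartz
  have hX1 : ∫ z, X z = 1 := by
    rw [X.integral_eq_fourier_zero, hX, cutoff_eq_one (by simp)]
  obtain ⟨C, hC, hCb⟩ := integral_mul_comp_sub_smul_bound h X (Module.finrank ℝ V + 1)
  obtain ⟨K, hK, hKb⟩ := integral_mul_comp_sub_smul_low h X hh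
  set d := Module.finrank ℝ V with hd
  let Φ : ℕ → V → ℂ := fun k ξ =>
    𝓕 h ξ * (cutoff (((k : ℝ) + 1 + 1)⁻¹ • ξ) - cutoff ((((k : ℝ) + 1 + 1)⁻¹)⁻¹ • ξ))
  have hpos : ∀ k : ℕ, (0 : ℝ) < (k : ℝ) + 1 + 1 := fun k => by positivity
  have hT : ∀ r : ℝ, r ≠ 0 → IsTest fun ξ : V => 𝓕 h ξ * cutoff (r • ξ) := fun r hr =>
    (isTest_cutoff_smul hr).mul_left ((𝓕 h : SchwartzMap V ℂ).smooth _)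
  have hΦ : ∀ k, IsPuncturedTest (Φ k) := by
    intro k
    have h1 := hT _ (inv_ne_zero (hpos k).ne')
    have h2 := hT _ (inv_ne_zero (inv_ne_zero (hpos k).ne'))
    have e : Φ k = (fun ξ => 𝓕 h ξ * cutoff (((k : ℝ) + 1 + 1)⁻¹ • ξ)) -
        fun ξ => 𝓕 h ξ * cutoff ((((k : ℝ) + 1 + 1)⁻¹)⁻¹ • ξ) := by
      ext ξ
      simp [Φ, mul_sub]
    refine ⟨⟨e ▸ h1.contDiff.sub h2.contDiff, e ▸ h1.hasCompactSupport.sub h2.hasCompactSupport⟩,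
      ?_⟩
    have hone : ∀ r : ℝ, ∀ᶠ ξ : V in nhds 0, cutoff (r • ξ) = 1 := by
      intro r
      have : Filter.Tendsto (fun ξ : V => ‖r • ξ‖) (nhds 0) (nhds 0) := by
        have hc : Continuous fun ξ : V => ‖r • ξ‖ := by fun_prop
        simpa using hc.tendsto 0
      filter_upwards [this.eventually (gt_mem_nhds one_pos)] with ξ hξ
      exact cutoff_eq_one hξ.le
    filter_upwards [hone (((k : ℝ) + 1 + 1)⁻¹), hone ((((k : ℝ) + 1 + 1)⁻¹)⁻¹)] with ξ a b
    simp only [Φ, a, b, sub_self, mul_zero]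
  have hchar : ∀ k x, charIntegral (Φ k) x =
      (∫ z, X z * h (x - ((k : ℝ) + 1 + 1)⁻¹ • z)) -
        ∫ z, X z * h (x - (((k : ℝ) + 1 + 1)⁻¹)⁻¹ • z) := by
    intro k x
    rw [← charIntegral_fourier_mul_cutoff h X hX, ← charIntegral_fourier_mul_cutoff h X hX]
    unfold charIntegral
    rw [← integral_sub ((hT _ (inv_ne_zero (hpos k).ne')).integrable_charIntegral x)
      ((hT _ (inv_ne_zero (inv_ne_zero (hpos k).ne'))).integrable_charIntegral x)]
    refine integral_congr_ae (Filter.Eventually.of_forall fun ξ => ?_)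
    simp only [Φ]
    ring
  have hlow : ∀ (k : ℕ) (x : V), ‖∫ z, X z * h (x - (((k : ℝ) + 1 + 1)⁻¹)⁻¹ • z)‖ ≤
      K * decayWeight x := by
    intro k x
    have hε : 0 < ((k : ℝ) + 1 + 1)⁻¹ := inv_pos.2 (hpos k)
    have hε1 : ((k : ℝ) + 1 + 1)⁻¹ ≤ 1 := inv_le_one_of_one_le₀ (by linarith [k.cast_nonneg (α := ℝ)])
    refine (hKb _ hε hε1 x).trans ?_
    rw [mul_div_assoc, ← div_pow, decayWeight, ← inv_pow]
    gcongr
    rw [div_le_iff₀ (by positivity), inv_mul_eq_div, le_div_iff₀ (by positivity)]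
    nlinarith [norm_nonneg x]
  have hlow0 : ∀ x : V, Filter.Tendsto
      (fun k : ℕ => ∫ z, X z * h (x - (((k : ℝ) + 1 + 1)⁻¹)⁻¹ • z)) Filter.atTop (nhds 0) := by
    intro x
    have ht : Filter.Tendsto (fun k : ℕ => ((k : ℝ) + 1 + 1)⁻¹) Filter.atTop (nhds 0) := by
      have := (tendsto_one_div_add_atTop_nhds_zero_nat (𝕜 := ℝ)).comp (Filter.tendsto_add_atTop_nat 1)
      simpa [Function.comp_def] using this
    refine squeeze_zero_norm (a := fun k : ℕ => K * (((k : ℝ) + 1 + 1)⁻¹) ^ (d + 1)) (fun k => ?_) ?_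
    · have hε : 0 < ((k : ℝ) + 1 + 1)⁻¹ := inv_pos.2 (hpos k)
      have hε1 : ((k : ℝ) + 1 + 1)⁻¹ ≤ 1 :=
        inv_le_one_of_one_le₀ (by linarith [k.cast_nonneg (α := ℝ)])
      refine (hKb _ hε hε1 x).trans (div_le_self (by positivity) (one_le_pow₀ ?_))
      have : 0 ≤ ((k : ℝ) + 1 + 1)⁻¹ * ‖x‖ := by positivity
      linarith
    · simpa using (ht.pow (d + 1)).const_mul K
  have hlim : Filter.Tendsto (fun k => ∫ x, v x * charIntegral (Φ k) x) Filter.atTop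
      (nhds (∫ x, v x * h x)) := by
    refine tendsto_integral_of_dominated_convergence (fun x => (C + K) * ‖decayWeight x • v x‖)
      (fun k => ?_) (hv.norm.const_mul _) (fun k => Filter.Eventually.of_forall fun x => ?_)
      (Filter.Eventually.of_forall fun x => ?_)
    · obtain ⟨f, hf, -⟩ := (hΦ k).toIsTest.exists_schwartz
      rw [← hf]
      exact (f.integrable_mul_of_decayWeight hv).aestronglyMeasurable
    · rw [norm_mul, norm_smul, Real.norm_of_nonneg (decayWeight_pos x).le, hchar]
      have h1 := hCb ((k : ℝ) + 1 + 1) (by linarith [k.cast_nonneg (α := ℝ)]) x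
      have h2 := (norm_sub_le _ _).trans (add_le_add h1 (hlow k x))
      calc _ ≤ ‖v x‖ * (C / (1 + ‖x‖) ^ (d + 1) + K * decayWeight x) := by gcongr
        _ = _ := by rw [decayWeight]; ring
    · refine Filter.Tendsto.const_mul _ ?_
      simp_rw [hchar]
      have h1 := (tendsto_integral_mul_comp_sub_smul h X hX1 x).comp
        (Filter.tendsto_add_atTop_nat 1)
      simpa [Function.comp_def] using h1.sub (hlow0 x)
  refine tendsto_nhds_unique hlim ?_
  simp_rw [fun k => h0 (Φ k) (hΦ k)]
  exact tendsto_const_nhds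

/-- A function of moderate growth whose Fourier transform is supported at the origin, and which is
integrable against `decayWeight`, is constant. -/
lemma ae_const_of_puncturedTest {v : V → ℂ} (hv : Integrable fun x => decayWeight x • v x)
    (h0 : ∀ Φ : V → ℂ, IsPuncturedTest Φ → ∫ x, v x * charIntegral Φ x = 0) :
    ∃ c : ℂ, ∀ᵐ x, v x = c := by
  obtain ⟨X, -, hX⟩ := (isTest_cutoff (V := V)).exists_schwartz
  have hX1 : ∫ z, X z = 1 := by
    rw [X.integral_eq_fourier_zero, hX, cutoff_eq_one (by simp)]
  refine ⟨∫ x, v x * X x, ?_⟩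
  refine ae_eq_of_integral_contDiff_smul_eq (locallyIntegrable_of_decayWeight hv)
    (locallyIntegrable_const _) fun g hg hgc => ?_
  have hgc' : HasCompactSupport fun x => (g x : ℂ) := hgc.comp_left Complex.ofReal_zero
  let G : SchwartzMap V ℂ := hgc'.toSchwartzMap (Complex.ofRealCLM.contDiff.comp hg)
  have hG : ∀ x, G x = (g x : ℂ) := fun x => rfl
  have h1 := integral_mul_eq_zero_of_puncturedTest hv h0 (G - (∫ y, G y) • X) (by
    simp only [sub_apply, smul_apply, smul_eq_mul]
    rw [integral_sub G.integrable (X.integrable.const_mul _), integral_const_mul, hX1]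
    ring)
  simp only [sub_apply, smul_apply, smul_eq_mul, mul_sub] at h1
  have e : ∀ x, v x * ((∫ y, G y) * X x) = (∫ y, G y) * (v x * X x) := fun x => by ring
  simp_rw [e] at h1
  rw [integral_sub (G.integrable_mul_of_decayWeight hv) ((X.integrable_mul_of_decayWeight hv).const_mul _),
    integral_const_mul, sub_eq_zero] at h1
  simp only [Complex.real_smul, ← hG]
  rw [integral_mul_const, ← h1]
  simp_rw [mul_comm]

end Decay

section L1

lemma integral_kernel_eq_zero {X Y : Type*} [MeasurableSpace X] [MeasurableSpace Y]
    {μ : Measure X} {ν : Measure Y} [SFinite μ] [SFinite ν] {T : X → Y → ℂ} {M : Y → ℝ}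
    (hT : AEStronglyMeasurable (Function.uncurry T) (μ.prod ν)) (hM : Integrable M ν)
    (h : ∀ᵐ y ∂ν, Integrable (fun x => T x y) μ ∧ ∫ x, ‖T x y‖ ∂μ ≤ M y ∧ ∫ x, T x y ∂μ = 0) :
    Integrable (fun x => ∫ y, T x y ∂ν) μ ∧ ∫ x, ∫ y, T x y ∂ν ∂μ = 0 := by
  have hI : Integrable (Function.uncurry T) (μ.prod ν) := by
    rw [integrable_prod_iff' hT]
    refine ⟨h.mono fun y hy => hy.1, hM.mono' hT.norm.prod_swap.integral_prod_right'
      (h.mono fun y hy => ?_)⟩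
    rw [Real.norm_of_nonneg (integral_nonneg fun _ => norm_nonneg _)]
    exact hy.2.1
  refine ⟨hI.integral_prod_left, ?_⟩
  rw [integral_integral_swap hI, integral_congr_ae (g := fun _ => 0) (h.mono fun y hy => hy.2.2)]
  simp

variable {V : Type*} [NormedAddCommGroup V] [InnerProductSpace ℝ V] [FiniteDimensional ℝ V]
  [MeasurableSpace V] [BorelSpace V]

lemma integral_norm_translate_sub_le {F : Type*} [NormedAddCommGroup F] [NormedSpace ℝ F]
    [CompleteSpace F] {f : V → F} (hf : ContDiff ℝ 1 f) (hi : Integrable f)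
    (hi' : Integrable (fderiv ℝ f)) (h : V) :
    ∫ x, ‖f (x + h) - f x‖ ≤ ‖h‖ * ∫ x, ‖fderiv ℝ f x‖ := by
  have hc : Continuous (fderiv ℝ f) := hf.continuous_fderiv one_ne_zero
  have hI : Integrable (Function.uncurry fun (x : V) (r : ℝ) => ‖fderiv ℝ f (x + r • h)‖ * ‖h‖)
      (volume.prod (volume.restrict (Ioc (0 : ℝ) 1))) := by
    rw [integrable_prod_iff' (Continuous.aestronglyMeasurable (by fun_prop))]
    refine ⟨Filter.Eventually.of_forall fun r =>
      ((hi'.comp_add_right (r • h)).norm.mul_const _), ?_⟩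
    have e : ∀ r : ℝ, ∫ x : V, ‖Function.uncurry
        (fun (x : V) (r : ℝ) => ‖fderiv ℝ f (x + r • h)‖ * ‖h‖) (x, r)‖ =
        (∫ x, ‖fderiv ℝ f x‖) * ‖h‖ := by
      intro r
      simp only [Function.uncurry_apply_pair, norm_mul, norm_norm]
      rw [integral_mul_const, integral_add_right_eq_self (fun x => ‖fderiv ℝ f x‖)]
    simp_rw [e]
    exact integrable_const _
  have hpt : ∀ x, ‖f (x + h) - f x‖ ≤ ∫ r in Ioc (0 : ℝ) 1, ‖fderiv ℝ f (x + r • h)‖ * ‖h‖ := by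
    intro x
    have h1 : f (x + h) - f x = ∫ r in (0 : ℝ)..1, fderiv ℝ f (x + r • h) h := by
      rw [intervalIntegral.integral_eq_sub_of_hasDerivAt (f := fun r : ℝ => f (x + r • h))]
      · simp
      · intro r _
        have h2 := (hf.differentiable one_ne_zero (x + r • h)).hasFDerivAt
        have h3 : HasDerivAt (fun r : ℝ => x + r • h) h r := by
          simpa using ((hasDerivAt_id r).smul_const h).const_add x
        exact h2.comp_hasDerivAt r h3
      · exact Continuous.intervalIntegrable (by fun_prop) _ _
    rw [h1, intervalIntegral.integral_of_le zero_le_one]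
    refine (norm_integral_le_integral_norm _).trans ?_
    refine integral_mono ?_ ?_ fun r => ContinuousLinearMap.le_opNorm _ _
    · exact (Continuous.intervalIntegrable (by fun_prop) 0 1).1
    · exact (Continuous.intervalIntegrable (by fun_prop) 0 1).1
  calc ∫ x, ‖f (x + h) - f x‖
      ≤ ∫ x, ∫ r in Ioc (0 : ℝ) 1, ‖fderiv ℝ f (x + r • h)‖ * ‖h‖ :=
        integral_mono ((hi.comp_add_right h).sub hi).norm hI.integral_prod_left hpt
    _ = ∫ r in Ioc (0 : ℝ) 1, ∫ x, ‖fderiv ℝ f (x + r • h)‖ * ‖h‖ := integral_integral_swap hI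
    _ = ∫ r in Ioc (0 : ℝ) 1, (∫ x, ‖fderiv ℝ f x‖) * ‖h‖ := by
        refine integral_congr_ae (Filter.Eventually.of_forall fun r => ?_)
        simp only
        rw [integral_mul_const, integral_add_right_eq_self (fun x => ‖fderiv ℝ f x‖)]
    _ = _ := by simp [mul_comm]

lemma SchwartzMap.integral_norm_second_difference_le (f : SchwartzMap V ℂ) :
    ∃ C, ∀ h, ∫ x, ‖2 * f x - f (x + h) - f (x - h)‖ ≤ C * ‖h‖ ^ 2 := by
  let f1 := SchwartzMap.fderivCLM ℝ V ℂ f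
  let f2 := SchwartzMap.fderivCLM ℝ V _ f1
  have hf1 : ∀ x, fderiv ℝ f x = f1 x := fun x => (SchwartzMap.fderivCLM_apply ..).symm
  have hf2 : ∀ x, fderiv ℝ f1 x = f2 x := fun x => (SchwartzMap.fderivCLM_apply ..).symm
  refine ⟨∫ x, ‖f2 x‖, fun h => ?_⟩
  have hψ : ∀ x, fderiv ℝ (fun x => f (x + h) - f x) x = f1 (x + h) - f1 x := by
    intro x
    rw [fderiv_fun_sub 
      ((differentiableAt_comp_add_right h).2 f.differentiableAt) f.differentiableAt,
      fderiv_comp_add_right, hf1, hf1]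
  have h1 := integral_norm_translate_sub_le (f := fun x => f (x + h) - f x)
    (((f.smooth 1).comp (contDiff_id.add contDiff_const)).sub (f.smooth 1))
    ((f.integrable.comp_add_right h).sub f.integrable)
    (((f1.integrable.comp_add_right h).sub f1.integrable).congr
      (Filter.Eventually.of_forall fun x => (hψ x).symm)) (-h)
  have h2 := integral_norm_translate_sub_le (f := f1) (f1.smooth 1) f1.integrable
    (f2.integrable.congr (Filter.Eventually.of_forall fun x => (hf2 x).symm)) h
  simp_rw [hψ] at h1
  simp_rw [hf2] at h2
  calc ∫ x, ‖2 * f x - f (x + h) - f (x - h)‖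
      = ∫ x, ‖f (x + -h + h) - f (x + -h) - (f (x + h) - f x)‖ := by
        refine integral_congr_ae (Filter.Eventually.of_forall fun x => ?_)
        simp only [← sub_eq_add_neg, sub_add_cancel]
        congr 1
        ring
    _ ≤ ‖-h‖ * (‖h‖ * ∫ x, ‖f2 x‖) := h1.trans (by gcongr)
    _ = _ := by rw [norm_neg]; ring

lemma SchwartzMap.integral_marchaud_eq_zero {α : ℝ} (hα0 : 0 < α) (hα1 : α < 1)
    (g : SchwartzMap ℝ ℂ) :
    Integrable (fun t => ∫ y in Ioi (0 : ℝ), (g t - g (t + y)) / ((y ^ (1 + α) : ℝ) : ℂ)) ∧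
      ∫ t, ∫ y in Ioi (0 : ℝ), (g t - g (t + y)) / ((y ^ (1 + α) : ℝ) : ℂ) = 0 := by
  have hgc := g.continuous.measurable
  have hgi : Integrable (fun t => ‖g t‖) := g.integrable.norm
  have hg' : Integrable (fderiv ℝ g) := (SchwartzMap.fderivCLM ℝ ℝ ℂ g).integrable
  set A := ∫ t, ‖g t‖ with hA
  set B := ∫ t, ‖fderiv ℝ g t‖ with hB
  have hA0 : 0 ≤ A := by positivity
  have hB0 : 0 ≤ B := by positivity
  refine integral_kernel_eq_zero (μ := volume) (ν := volume.restrict (Ioi (0 : ℝ)))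
    (M := fun y => (2 * A + B) * (min 1 (y ^ 1) / y ^ (1 + α))) ?_
    ((integrableOn_min_one_pow_div_rpow (k := 1) hα0 (by simpa using hα1)).const_mul _) ?_
  · refine Measurable.aestronglyMeasurable ?_
    simp only [Function.uncurry_def]
    fun_prop
  · filter_upwards [ae_restrict_mem measurableSet_Ioi] with y hy
    have hy0 : (0 : ℝ) < y := hy
    have hi := (g.integrable (μ := volume)).sub (g.integrable.comp_add_right y)
    refine ⟨hi.div_const _, ?_, ?_⟩
    · simp_rw [norm_div, Complex.norm_real, Real.norm_of_nonneg (Real.rpow_nonneg hy0.le (1 + α))]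
      rw [integral_div, ← mul_div_assoc]
      gcongr
      have h1 : ∫ t, ‖g t - g (t + y)‖ ≤ B * y := by
        have := integral_norm_translate_sub_le (g.smooth 1) g.integrable hg' y
        rw [Real.norm_of_nonneg hy0.le, mul_comm] at this
        simpa only [norm_sub_rev] using this
      have h2 : ∫ t, ‖g t - g (t + y)‖ ≤ 2 * A := by
        calc _ ≤ ∫ t, (‖g t‖ + ‖g (t + y)‖) :=
              integral_mono hi.norm (hgi.add (hgi.comp_add_right y)) fun t => norm_sub_le _ _
          _ = 2 * A := by
              rw [integral_add hgi (hgi.comp_add_right y),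
                integral_add_right_eq_self (fun t => ‖g t‖), two_mul]
      rw [pow_one]
      rcases min_cases 1 y with ⟨h, -⟩ | ⟨h, -⟩ <;> rw [h] <;> nlinarith
    · rw [integral_div, integral_sub g.integrable (g.integrable.comp_add_right y),
        integral_add_right_eq_self g, sub_self, zero_div]

lemma SchwartzMap.integral_fracLap_eq_zero [Nontrivial V] {s : ℝ} (hs0 : 0 < s) (hs1 : s < 1)
    (f : SchwartzMap V ℂ) :
    Integrable (fun x => ∫ y, (2 * f x - f (x + y) - f (x - y)) /
        ((‖y‖ ^ ((Module.finrank ℝ V : ℝ) + 2 * s) : ℝ) : ℂ)) ∧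
      ∫ x, ∫ y, (2 * f x - f (x + y) - f (x - y)) /
        ((‖y‖ ^ ((Module.finrank ℝ V : ℝ) + 2 * s) : ℝ) : ℂ) = 0 := by
  have hfc := f.continuous.measurable
  have hfi : Integrable (fun x => ‖f x‖) := f.integrable.norm
  obtain ⟨B, hB⟩ := f.integral_norm_second_difference_le
  set A := ∫ x, ‖f x‖ with hA
  have hA0 : 0 ≤ A := by positivity
  refine integral_kernel_eq_zero (μ := volume) (ν := volume)
    (M := fun y => (4 * A + |B|) *
      (min 1 (‖y‖ ^ 2) / ‖y‖ ^ ((Module.finrank ℝ V : ℝ) + 2 * s))) ?_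
    ((integrable_min_one_sq_div_norm_rpow hs0 hs1).const_mul _) ?_
  · refine Measurable.aestronglyMeasurable ?_
    simp only [Function.uncurry_def]
    fun_prop
  · refine Filter.Eventually.of_forall fun y => ?_
    have hp := (f.integrable (μ := volume)).comp_add_right y
    have hm := (f.integrable (μ := volume)).comp_sub_right y
    have h2f := (f.integrable (μ := volume)).const_mul 2
    have hi := (h2f.sub hp).sub hm
    refine ⟨hi.div_const _, ?_, ?_⟩
    · simp_rw [norm_div, Complex.norm_real]
      rw [integral_div, ← mul_div_assoc, Real.norm_of_nonneg (by positivity)]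
      gcongr
      have h1 : ∫ x, ‖2 * f x - f (x + y) - f (x - y)‖ ≤ |B| * ‖y‖ ^ 2 :=
        (hB y).trans (by gcongr; exact le_abs_self B)
      have h2 : ∫ x, ‖2 * f x - f (x + y) - f (x - y)‖ ≤ 4 * A := by
        calc _ ≤ ∫ x, (2 * ‖f x‖ + ‖f (x + y)‖ + ‖f (x - y)‖) := by
              refine integral_mono hi.norm (((hfi.const_mul 2).add (hfi.comp_add_right y)).add
                (hfi.comp_sub_right y)) fun x => ?_
              refine (norm_sub_le _ _).trans (add_le_add ((norm_sub_le _ _).trans ?_) le_rfl)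
              simp
          _ = 4 * A := by
              rw [integral_add (f := fun x => 2 * ‖f x‖ + ‖f (x + y)‖)
                ((hfi.const_mul 2).add (hfi.comp_add_right y))
                (hfi.comp_sub_right y), integral_add (hfi.const_mul 2) (hfi.comp_add_right y),
                integral_add_right_eq_self (fun t => ‖f t‖),
                integral_sub_right_eq_self (fun t => ‖f t‖), integral_const_mul]
              ring
      have hB0 := abs_nonneg B
      have hy0 := sq_nonneg ‖y‖
      rcases min_cases 1 (‖y‖ ^ 2) with ⟨h, -⟩ | ⟨h, -⟩ <;> rw [h] <;> nlinarith
    · rw [integral_div, integral_sub (f := fun x => 2 * f x - f (x + y)) (h2f.sub hp) hm,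
        integral_sub h2f hp,
        integral_add_right_eq_self f, integral_sub_right_eq_self f, integral_const_mul]
      ring

end L1

section JointTest

variable {V : Type*} [NormedAddCommGroup V] [InnerProductSpace ℝ V] [FiniteDimensional ℝ V]
  [MeasurableSpace V] [BorelSpace V]

/-- The space-time inverse Fourier integral of `Φ`. -/
noncomputable def jointIntegral (Φ : V × ℝ → ℂ) (x : V) (t : ℝ) : ℂ :=
  ∫ p : V × ℝ, unitExp (⟪p.1, x⟫ + ⟪p.2, t⟫) * Φ p

lemma IsTest.exists_joint_schwartz {Φ : V × ℝ → ℂ} (h : IsTest Φ) :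
    ∃ φ : SchwartzMap (V × ℝ) ℂ, ∀ x t, φ (x, t) = jointIntegral Φ x t := by
  let e := WithLp.prodContinuousLinearEquiv 2 ℝ V ℝ
  have h' : IsTest (Φ ∘ e) :=
    ⟨h.contDiff.comp e.contDiff, h.hasCompactSupport.comp_homeomorph e.toHomeomorph⟩
  obtain ⟨f, hf, -⟩ := h'.exists_schwartz
  refine ⟨SchwartzMap.compCLMOfContinuousLinearEquiv ℝ e.symm f, fun x t => ?_⟩
  rw [SchwartzMap.compCLMOfContinuousLinearEquiv_apply, Function.comp_apply, hf, charIntegral,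
    jointIntegral]
  have h1 := (WithLp.volume_preserving_ofLp V ℝ).integral_comp
    e.toHomeomorph.measurableEmbedding
    (fun p : V × ℝ => unitExp (⟪p.1, x⟫ + ⟪p.2, t⟫) * Φ p)
  rw [← h1]
  rfl

lemma jointIntegral_mul (Φ₁ : V → ℂ) (Φ₂ : ℝ → ℂ) (x : V) (t : ℝ) :
    jointIntegral (fun p => Φ₁ p.1 * Φ₂ p.2) x t = charIntegral Φ₁ x * charIntegral Φ₂ t := by
  rw [jointIntegral, charIntegral, charIntegral, ← integral_prod_mul, Measure.volume_eq_prod]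
  refine integral_congr_ae (Filter.Eventually.of_forall fun p => ?_)
  simp only
  rw [unitExp_add]
  ring

/-- The Fourier symbol of `a D_right^α + b (-Δ)^s` with unnormalized operators. -/
noncomputable def dualSymbol (a b α s : ℝ) (p : V × ℝ) : ℂ :=
  a * marchaudSymbol α p.2 + b * fracLapSymbol s p.1

lemma IsTest.integrable_mul_of_continuous {W : Type*} [NormedAddCommGroup W] [NormedSpace ℝ W]
    [MeasurableSpace W] [BorelSpace W] {μ : Measure W} [IsFiniteMeasureOnCompacts μ] {Φ : W → ℂ}
    (h : IsTest Φ) {w : W → ℝ} (hw : Continuous w) : Integrable (fun z => w z * ‖Φ z‖) μ := by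
  have hc := h.contDiff.continuous
  exact Continuous.integrable_of_hasCompactSupport (by fun_prop) h.hasCompactSupport.norm.mul_left

lemma setIntegral_Ioi_translate (f : ℝ → ℝ) (t : ℝ) :
    ∫ τ in Ioi t, f τ = ∫ y in Ioi (0 : ℝ), f (t + y) := by
  have h := (measurePreserving_add_left (volume : Measure ℝ) t).setIntegral_preimage_emb
    (measurableEmbedding_addLeft t) f (Ioi t)
  rw [← h]
  simp

end JointTest

section Equation

variable {n : ℕ} {α s : ℝ}

lemma marchaudRight_add_fracLap_comp [Nontrivial (EuclideanSpace ℝ (Fin n))]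
    (hα0 : 0 < α) (hα1 : α < 1) (hs0 : 0 < s) (hs1 : s < 1)
    {Φ : EuclideanSpace ℝ (Fin n) × ℝ → ℂ} (hΦ : IsTest Φ) (ρ : ℂ →L[ℝ] ℝ)
    (x : EuclideanSpace ℝ (Fin n)) (t : ℝ) :
    marchaudRight α (fun p => ρ (jointIntegral Φ p.1 p.2)) x t +
        fracLap s (fun p => ρ (jointIntegral Φ p.1 p.2)) x t =
      ρ (jointIntegral (fun p => dualSymbol (Calpha α) (Cns n s / 2) α s p * Φ p) x t) := by
  have hΦc := hΦ.contDiff.continuous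
  have hc := continuous_unitExp
  have hd : Module.finrank ℝ (EuclideanSpace ℝ (Fin n)) = n := finrank_euclideanSpace_fin
  have hρ : ∀ (z : ℂ) (r : ℝ), ρ (z / (r : ℂ)) = ρ z / r := by
    intro z r
    rw [div_eq_inv_mul, ← Complex.ofReal_inv, ← Complex.real_smul, map_smul, smul_eq_mul,
      div_eq_inv_mul]
  have hA1 : Continuous fun p : EuclideanSpace ℝ (Fin n) × ℝ => unitExp ⟪p.1, x⟫ := by fun_prop
  have hB1 : Continuous fun p : EuclideanSpace ℝ (Fin n) × ℝ => unitExp ⟪p.2, t⟫ := by fun_prop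
  have hone : ∀ᵐ p : EuclideanSpace ℝ (Fin n) × ℝ, ‖unitExp ⟪p.1, x⟫‖ ≤ 1 :=
    Filter.Eventually.of_forall fun p => by simp
  have hone' : ∀ᵐ p : EuclideanSpace ℝ (Fin n) × ℝ, ‖unitExp ⟪p.2, t⟫‖ ≤ 1 :=
    Filter.Eventually.of_forall fun p => by simp
  have hA := marchaud_superposition (μ := (volume : Measure (EuclideanSpace ℝ (Fin n) × ℝ)))
    hα0 hα1 (τ := Prod.snd) measurable_snd (Ψ := fun p => unitExp ⟪p.1, x⟫ * Φ p)
    (hΦ.integrable.bdd_mul (c := 1) hA1.aestronglyMeasurable hone)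
    (by simpa using hΦ.integrable_mul_of_continuous (w := fun p => 1 + |p.2|) (by fun_prop)) t
  have hB := fracLap_superposition (μ := (volume : Measure (EuclideanSpace ℝ (Fin n) × ℝ)))
    hs0 hs1 (ξ := Prod.fst) measurable_fst (Ψ := fun p => unitExp ⟪p.2, t⟫ * Φ p)
    (hΦ.integrable.bdd_mul (c := 1) hB1.aestronglyMeasurable hone')
    (by simpa using hΦ.integrable_mul_of_continuous (w := fun p => (1 + ‖p.1‖) ^ 2)
          (by fun_prop)) x
  have eA : ∀ r : ℝ, ∫ p : EuclideanSpace ℝ (Fin n) × ℝ,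
      unitExp (p.2 * r) * (unitExp ⟪p.1, x⟫ * Φ p) = jointIntegral Φ x r := by
    intro r
    refine integral_congr_ae (Filter.Eventually.of_forall fun p => ?_)
    simp only [RCLike.inner_apply, conj_trivial]
    rw [unitExp_add, mul_comm r]
    ring
  have eB : ∀ r, ∫ p : EuclideanSpace ℝ (Fin n) × ℝ,
      unitExp ⟪p.1, r⟫ * (unitExp ⟪p.2, t⟫ * Φ p) = jointIntegral Φ r t := by
    intro r
    refine integral_congr_ae (Filter.Eventually.of_forall fun p => ?_)
    simp only
    rw [unitExp_add, mul_assoc]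
  simp only [eA] at hA
  simp only [eB, hd] at hB
  have e1 : marchaudRight α (fun p => ρ (jointIntegral Φ p.1 p.2)) x t = ρ (Calpha α *
      ∫ p : EuclideanSpace ℝ (Fin n) × ℝ,
        unitExp (p.2 * t) * (marchaudSymbol α p.2 * (unitExp ⟪p.1, x⟫ * Φ p))) := by
    rw [marchaudRight, ← Complex.real_smul, map_smul, smul_eq_mul, ← hA.2.1,
      ← ρ.integral_comp_comm hA.1, setIntegral_Ioi_translate]
    simp only [hρ, map_sub, add_sub_cancel_left]
  have e2 : fracLap s (fun p => ρ (jointIntegral Φ p.1 p.2)) x t = ρ (((Cns n s / 2 : ℝ) : ℂ) *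
      ∫ p : EuclideanSpace ℝ (Fin n) × ℝ,
        unitExp ⟪p.1, x⟫ * (fracLapSymbol s p.1 * (unitExp ⟪p.2, t⟫ * Φ p))) := by
    have h2 : ∀ z : ℂ, ρ (2 * z) = 2 * ρ z := fun z => by
      rw [two_mul, map_add, two_mul]
    rw [fracLap, ← Complex.real_smul, map_smul, smul_eq_mul, ← hB.2.1, ← ρ.integral_comp_comm hB.1]
    simp only [hρ, map_sub, h2]
  rw [e1, e2, ← map_add, jointIntegral]
  congr 1
  rw [← integral_const_mul, ← integral_const_mul, ← integral_add]
  · refine integral_congr_ae (Filter.Eventually.of_forall fun p => ?_)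
    simp only [dualSymbol, RCLike.inner_apply, conj_trivial]
    rw [unitExp_add, mul_comm t]
    ring
  · exact hA.2.2.const_mul _
  · exact hB.2.2.const_mul _

/-- Testing the equation against Fourier integrals of smooth compactly supported functions. -/
lemma integral_eq_zero_of_solution [Nontrivial (EuclideanSpace ℝ (Fin n))]
    (hα0 : 0 < α) (hα1 : α < 1) (hs0 : 0 < s) (hs1 : s < 1)
    {u : EuclideanSpace ℝ (Fin n) × ℝ → ℝ}
    (hu_sol : ∀ φ : SchwartzMap (EuclideanSpace ℝ (Fin n) × ℝ) ℝ,
      ∫ t : ℝ, ∫ x : EuclideanSpace ℝ (Fin n),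
        u (x, t) * (marchaudRight α (⇑φ) x t + fracLap s (⇑φ) x t) = 0)
    {Φ : EuclideanSpace ℝ (Fin n) × ℝ → ℂ} (hΦ : IsTest Φ)
    {K : EuclideanSpace ℝ (Fin n) → ℝ → ℂ}
    (hK : ∀ x t, jointIntegral (fun p => dualSymbol (Calpha α) (Cns n s / 2) α s p * Φ p) x t
      = K x t)
    (h1 : ∀ᵐ t, Integrable fun x => (u (x, t) : ℂ) * K x t)
    (h2 : Integrable fun t => ∫ x, (u (x, t) : ℂ) * K x t) :
    ∫ t, ∫ x, (u (x, t) : ℂ) * K x t = 0 := by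
  obtain ⟨φ, hφ⟩ := hΦ.exists_joint_schwartz
  have key : ∀ ρ : ℂ →L[ℝ] ℝ, ρ (∫ t, ∫ x, (u (x, t) : ℂ) * K x t) = 0 := by
    intro ρ
    have hρ : ⇑(SchwartzMap.postcompCLM ρ φ) =
        fun p : EuclideanSpace ℝ (Fin n) × ℝ => ρ (jointIntegral Φ p.1 p.2) := by
      ext p
      rw [SchwartzMap.postcompCLM_apply, ← hφ]
    have h := hu_sol (SchwartzMap.postcompCLM ρ φ)
    rw [hρ] at h
    simp_rw [marchaudRight_add_fracLap_comp hα0 hα1 hs0 hs1 hΦ, hK] at h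
    rw [← ρ.integral_comp_comm h2, ← h]
    refine integral_congr_ae (h1.mono fun t ht => ?_)
    simp only
    rw [← ρ.integral_comp_comm ht]
    refine integral_congr_ae (Filter.Eventually.of_forall fun x => ?_)
    simp only
    rw [← Complex.real_smul, map_smul, smul_eq_mul]
  exact Complex.ext (key Complex.reCLM) (key Complex.imCLM)

end Equation

lemma ae_eq_zero_of_integral_prod_eq_zero {X Y : Type*} [MeasurableSpace X] [MeasurableSpace Y]
    {μ : Measure (X × Y)} {F : X × Y → ℂ} (hF : Integrable F μ)
    (h : ∀ A B, MeasurableSet A → MeasurableSet B → ∫ p in A ×ˢ B, F p ∂μ = 0) :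
    ∀ᵐ p ∂μ, F p = 0 := by
  have key : ∀ S, MeasurableSet S → ∫ p in S, F p ∂μ = 0 := by
    refine MeasurableSpace.induction_on_inter generateFrom_prod.symm isPiSystem_prod (by simp)
      ?_ (fun S hS ih => ?_) fun S hd hS ih => ?_
    · rintro _ ⟨A, hA, B, hB, rfl⟩
      exact h A B hA hB
    · have h1 := integral_add_compl hS hF
      have h2 := h univ univ .univ .univ
      rw [univ_prod_univ, setIntegral_univ] at h2
      rwa [ih, zero_add, h2] at h1
    · rw [integral_iUnion hS hd hF.integrableOn]
      simp [ih]
  exact hF.ae_eq_zero_of_forall_setIntegral_eq_zero fun S hS _ => key S hS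

lemma IsTest.prod {V W : Type*} [NormedAddCommGroup V] [NormedSpace ℝ V] [NormedAddCommGroup W]
    [NormedSpace ℝ W] {Φ : V → ℂ} {Ψ : W → ℂ} (hΦ : IsTest Φ) (hΨ : IsTest Ψ) :
    IsTest fun p : V × W => Φ p.1 * Ψ p.2 where
  contDiff := (hΦ.contDiff.comp contDiff_fst).mul (hΨ.contDiff.comp contDiff_snd)
  hasCompactSupport := by
    refine HasCompactSupport.intro (hΦ.hasCompactSupport.prod hΨ.hasCompactSupport) fun p hp => ?_
    by_contra hne
    refine hp ⟨subset_tsupport _ ?_, subset_tsupport _ ?_⟩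
    · exact left_ne_zero_of_mul hne
    · exact right_ne_zero_of_mul hne

section Punctured

variable {V : Type*} [NormedAddCommGroup V] [InnerProductSpace ℝ V]

lemma IsPuncturedTest.mul_left {Φ m : V → ℂ} (hΦ : IsPuncturedTest Φ)
    (hm : ∀ ξ, ξ ≠ 0 → ContDiffAt ℝ (⊤ : ℕ∞) m ξ) : IsPuncturedTest fun ξ => m ξ * Φ ξ where
  contDiff := by
    refine contDiff_iff_contDiffAt.2 fun ξ => ?_
    by_cases hξ : ξ = 0
    · subst hξ
      refine contDiffAt_const (c := (0 : ℂ)).congr_of_eventuallyEq ?_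
      filter_upwards [hΦ.eventually_eq_zero] with η hη
      rw [hη, mul_zero]
    · exact (hm ξ hξ).mul hΦ.contDiff.contDiffAt
  hasCompactSupport := hΦ.hasCompactSupport.mul_left
  eventually_eq_zero := hΦ.eventually_eq_zero.mono fun η hη => by rw [hη, mul_zero]

lemma IsPuncturedTest.apply_zero {Φ : V → ℂ} (hΦ : IsPuncturedTest Φ) : Φ 0 = 0 :=
  hΦ.eventually_eq_zero.self_of_nhds

/-- Products of punctured tests absorb multipliers that are smooth off the coordinate axes. -/
lemma IsPuncturedTest.mul_prod {Φ : V → ℂ} {Ψ : ℝ → ℂ} {m : V × ℝ → ℂ} (hΦ : IsPuncturedTest Φ)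
    (hΨ : IsPuncturedTest Ψ)
    (hm : ∀ p : V × ℝ, p.1 ≠ 0 → p.2 ≠ 0 → ContDiffAt ℝ (⊤ : ℕ∞) m p) :
    IsTest fun p => m p * (Φ p.1 * Ψ p.2) where
  contDiff := by
    refine contDiff_iff_contDiffAt.2 fun p => ?_
    by_cases hp1 : p.1 = 0
    · refine contDiffAt_const (c := (0 : ℂ)).congr_of_eventuallyEq ?_
      have h : Filter.Tendsto (Prod.fst : V × ℝ → V) (nhds p) (nhds 0) :=
        hp1 ▸ continuous_fst.tendsto p
      filter_upwards [h.eventually hΦ.eventually_eq_zero] with η hη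
      rw [hη, zero_mul, mul_zero]
    by_cases hp2 : p.2 = 0
    · refine contDiffAt_const (c := (0 : ℂ)).congr_of_eventuallyEq ?_
      have h : Filter.Tendsto (Prod.snd : V × ℝ → ℝ) (nhds p) (nhds 0) :=
        hp2 ▸ continuous_snd.tendsto p
      filter_upwards [h.eventually hΨ.eventually_eq_zero] with η hη
      rw [hη, mul_zero, mul_zero]
    · exact (hm p hp1 hp2).mul (hΦ.toIsTest.prod hΨ.toIsTest).contDiff.contDiffAt
  hasCompactSupport := (hΦ.toIsTest.prod hΨ.toIsTest).hasCompactSupport.mul_left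

end Punctured

section Dominated

variable {V : Type*} [NormedAddCommGroup V] [InnerProductSpace ℝ V]
  [MeasurableSpace V] [BorelSpace V]

/-- Measurable functions dominated by `decayWeight`. -/
def IsDominated {V : Type*} [NormedAddCommGroup V] [InnerProductSpace ℝ V] [MeasurableSpace V]
    (f : V → ℂ) : Prop :=
  Measurable f ∧ ∃ C, ∀ x, ‖f x‖ ≤ C * decayWeight x

lemma SchwartzMap.isDominated (f : SchwartzMap V ℂ) : IsDominated f :=
  ⟨f.continuous.measurable, f.exists_norm_le_decayWeight⟩

lemma isDominated_indicator {B : Set V} (hB : MeasurableSet B) :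
    IsDominated (B.indicator fun x => ((decayWeight x : ℝ) : ℂ)) := by
  refine ⟨(Complex.measurable_ofReal.comp continuous_decayWeight.measurable).indicator hB, 1,
    fun x => (norm_indicator_le_norm_self _ _).trans ?_⟩
  rw [Complex.norm_real, Real.norm_of_nonneg (decayWeight_pos x).le, one_mul]

end Dominated

section Slices

variable {V W : Type*} [NormedAddCommGroup V] [InnerProductSpace ℝ V] [FiniteDimensional ℝ V]
  [MeasurableSpace V] [BorelSpace V] [NormedAddCommGroup W] [InnerProductSpace ℝ W]
  [FiniteDimensional ℝ W] [MeasurableSpace W] [BorelSpace W] {u : V × W → ℂ}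

/-- Integrability against the product of the weights `decayWeight`. -/
def HasDecay (u : V × W → ℂ) : Prop :=
  Integrable fun p : V × W => (decayWeight p.1 * decayWeight p.2) • u p

lemma HasDecay.swap (hu : HasDecay u) : HasDecay fun p : W × V => u p.swap := by
  have h := Integrable.swap (μ := (volume : Measure V)) (ν := (volume : Measure W)) hu
  refine h.congr (Filter.Eventually.of_forall fun p => ?_)
  simp only [Function.comp_apply, Prod.fst_swap, Prod.snd_swap, mul_comm]

lemma HasDecay.integrable_mul (hu : HasDecay u) {f : V → ℂ} {g : W → ℂ} (hf : IsDominated f)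
    (hg : IsDominated g) : Integrable (fun p : V × W => u p * (f p.1 * g p.2))
      ((volume : Measure V).prod volume) := by
  obtain ⟨hfm, C, hC⟩ := hf
  obtain ⟨hgm, D, hD⟩ := hg
  refine Integrable.mul_of_norm_le_weight (w := fun p : V × W => decayWeight p.1 * decayWeight p.2)
    (C := C * D) (fun p => mul_pos (decayWeight_pos _) (decayWeight_pos _)) ?_ hu ?_ fun p => ?_
  · have h1 := (continuous_decayWeight (V := V)).measurable
    have h2 := (continuous_decayWeight (V := W)).measurable
    fun_prop
  · exact Measurable.aestronglyMeasurable (by fun_prop)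
  · rw [norm_mul]
    calc ‖f p.1‖ * ‖g p.2‖ ≤ (C * decayWeight p.1) * (D * decayWeight p.2) :=
          mul_le_mul (hC _) (hD _) (norm_nonneg _) ((norm_nonneg _).trans (hC _))
      _ = _ := by ring

lemma HasDecay.ae_integrable_slice (hu : HasDecay u) {f : V → ℂ} (hf : IsDominated f) :
    ∀ᵐ t, Integrable fun x => u (x, t) * f x := by
  have h := hu.integrable_mul hf (isDominated_indicator (V := W) MeasurableSet.univ)
  filter_upwards [h.prod_left_ae] with t ht
  have hw : ((decayWeight t : ℝ) : ℂ) ≠ 0 := by exact_mod_cast (decayWeight_pos t).ne'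
  refine (ht.mul_const ((decayWeight t : ℝ) : ℂ)⁻¹).congr (Filter.Eventually.of_forall fun x => ?_)
  simp only [indicator_univ]
  field_simp

lemma HasDecay.integrable_slice (hu : HasDecay u) {f : V → ℂ} (hf : IsDominated f) :
    Integrable fun t => decayWeight t • ∫ x, u (x, t) * f x := by
  have h := hu.integrable_mul hf (isDominated_indicator (V := W) MeasurableSet.univ)
  refine h.integral_prod_right.congr (Filter.Eventually.of_forall fun t => ?_)
  simp only [indicator_univ, Complex.real_smul]
  rw [← integral_const_mul]
  refine integral_congr_ae (Filter.Eventually.of_forall fun x => ?_)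
  simp only
  ring

lemma HasDecay.integral_slice_comm (hu : HasDecay u) {f : V → ℂ} {g : W → ℂ} (hf : IsDominated f)
    (hg : IsDominated g) :
    ∫ x, (∫ t, u (x, t) * g t) * f x = ∫ t, (∫ x, u (x, t) * f x) * g t := by
  have h := integral_integral_swap (f := fun x t => u (x, t) * (f x * g t))
    (hu.integrable_mul hf hg)
  simp_rw [← integral_mul_const]
  simp_rw [mul_assoc, mul_comm (g _) (f _)]
  exact h

end Slices

section Liouville

variable {V : Type*} [NormedAddCommGroup V] [InnerProductSpace ℝ V] [FiniteDimensional ℝ V]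
  [MeasurableSpace V] [BorelSpace V] {a b α s : ℝ} {u : V × ℝ → ℂ}

/-- The equation with symbol `dualSymbol a b α s`, tested against Fourier integrals. -/
def IsSpectralSolution (a b α s : ℝ) (u : V × ℝ → ℂ) : Prop :=
  ∀ (Φ : V × ℝ → ℂ) (K : V → ℝ → ℂ), IsTest Φ →
    (∀ x t, jointIntegral (fun p => dualSymbol a b α s p * Φ p) x t = K x t) →
    (∀ᵐ t, Integrable fun x => u (x, t) * K x t) →
    (Integrable fun t => ∫ x, u (x, t) * K x t) → ∫ t, ∫ x, u (x, t) * K x t = 0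

lemma IsTest.isDominated {Φ : V → ℂ} (h : IsTest Φ) : IsDominated (charIntegral Φ) := by
  obtain ⟨f, hf, -⟩ := h.exists_schwartz
  exact hf ▸ f.isDominated

lemma IsTest.integrable_mul_charIntegral {Φ v : V → ℂ} (h : IsTest Φ)
    (hv : Integrable fun x => decayWeight x • v x) : Integrable fun x => v x * charIntegral Φ x := by
  obtain ⟨f, hf, -⟩ := h.exists_schwartz
  exact hf ▸ f.integrable_mul_of_decayWeight hv

lemma exists_schwartz_cutoff : ∃ X : SchwartzMap V ℂ, ⇑X = charIntegral cutoff ∧ ∫ x, X x = 1 := by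
  obtain ⟨X, hX, hX'⟩ := (isTest_cutoff (V := V)).exists_schwartz
  exact ⟨X, hX, by rw [X.integral_eq_fourier_zero, hX', cutoff_eq_one (by simp)]⟩

lemma jointIntegral_add {F G : V × ℝ → ℂ} (hF : Integrable F) (hG : Integrable G) (x : V) (t : ℝ) :
    jointIntegral (fun p => F p + G p) x t = jointIntegral F x t + jointIntegral G x t := by
  have hm : Continuous fun p : V × ℝ => unitExp (⟪p.1, x⟫ + ⟪p.2, t⟫) :=
    continuous_unitExp.comp (by fun_prop)
  have h1 : ∀ᵐ p : V × ℝ, ‖unitExp (⟪p.1, x⟫ + ⟪p.2, t⟫)‖ ≤ 1 :=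
    Filter.Eventually.of_forall fun p => by simp
  unfold jointIntegral
  rw [← integral_add (hF.bdd_mul (c := 1) hm.aestronglyMeasurable h1)
    (hG.bdd_mul (c := 1) hm.aestronglyMeasurable h1)]
  simp_rw [mul_add]

lemma charIntegral_const_mul (c : ℂ) (Φ : V → ℂ) (x : V) :
    charIntegral (fun ξ => c * Φ ξ) x = c * charIntegral Φ x := by
  unfold charIntegral
  rw [← integral_const_mul]
  refine integral_congr_ae (Filter.Eventually.of_forall fun ξ => ?_)
  simp only
  ring

lemma charIntegral_marchaudSymbol_mul_cutoff (hα0 : 0 < α) (hα1 : α < 1) :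
    Integrable (fun τ : ℝ => marchaudSymbol α τ * cutoff τ) ∧
    Integrable (charIntegral fun τ : ℝ => marchaudSymbol α τ * cutoff τ) ∧
      ∫ t, charIntegral (fun τ : ℝ => marchaudSymbol α τ * cutoff τ) t = 0 := by
  obtain ⟨X, hX, -⟩ := exists_schwartz_cutoff (V := ℝ)
  have hT := isTest_cutoff (V := ℝ)
  have h := marchaud_superposition (μ := volume) hα0 hα1 (τ := id) measurable_id hT.integrable
    (hT.integrable_mul_of_continuous (w := fun τ => 1 + |τ|) (by fun_prop))
  have e : ∀ r : ℝ, ∫ τ : ℝ, unitExp (id τ * r) * cutoff τ = X r := by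
    intro r
    rw [hX, charIntegral]
    simp only [id, RCLike.inner_apply, conj_trivial, mul_comm r]
  simp only [e] at h
  have e2 : charIntegral (fun τ : ℝ => marchaudSymbol α τ * cutoff τ) =
      fun t => ∫ y in Ioi (0 : ℝ), (X t - X (t + y)) / ((y ^ (1 + α) : ℝ) : ℂ) := by
    ext t
    rw [(h t).2.1, charIntegral]
    simp only [id, RCLike.inner_apply, conj_trivial, mul_comm t]
  rw [e2]
  refine ⟨?_, X.integral_marchaud_eq_zero hα0 hα1⟩
  simpa using (h 0).2.2

lemma charIntegral_fracLapSymbol_mul_cutoff [Nontrivial V] (hs0 : 0 < s) (hs1 : s < 1) :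
    Integrable (fun ξ : V => fracLapSymbol s ξ * cutoff ξ) ∧
    Integrable (charIntegral fun ξ : V => fracLapSymbol s ξ * cutoff ξ) ∧
      ∫ x, charIntegral (fun ξ : V => fracLapSymbol s ξ * cutoff ξ) x = 0 := by
  obtain ⟨X, hX, -⟩ := exists_schwartz_cutoff (V := V)
  have hT := isTest_cutoff (V := V)
  have h := fracLap_superposition (μ := volume) hs0 hs1 (ξ := id) measurable_id hT.integrable
    (hT.integrable_mul_of_continuous (w := fun ξ => (1 + ‖ξ‖) ^ 2) (by fun_prop))
  have e : ∀ r : V, ∫ ξ : V, unitExp ⟪id ξ, r⟫ * cutoff ξ = X r := by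
    intro r
    rw [hX, charIntegral]
    rfl
  simp only [e] at h
  have e2 : charIntegral (fun ξ : V => fracLapSymbol s ξ * cutoff ξ) =
      fun x => ∫ y, (2 * X x - X (x + y) - X (x - y)) /
        ((‖y‖ ^ ((Module.finrank ℝ V : ℝ) + 2 * s) : ℝ) : ℂ) := by
    ext x
    rw [(h x).2.1, charIntegral]
    rfl
  rw [e2]
  refine ⟨?_, X.integral_fracLap_eq_zero hs0 hs1⟩
  simpa using (h 0).2.2

lemma marchaudSymbol_ne_zero (hα0 : 0 < α) (hα1 : α < 1) {τ : ℝ} (hτ : τ ≠ 0) :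
    marchaudSymbol α τ ≠ 0 := fun h => by
  simpa [h] using marchaudSymbol_re_pos hα0 hα1 hτ

lemma fracLapSymbol_ne_zero [Nontrivial V] (hs0 : 0 < s) (hs1 : s < 1) {ξ : V} (hξ : ξ ≠ 0) :
    fracLapSymbol s ξ ≠ 0 := fun h => by
  simpa [h] using fracLapSymbol_re_pos hs0 hs1 hξ

lemma dualSymbol_ne_zero [Nontrivial V] (ha : 0 < a) (hb : 0 < b) (hα0 : 0 < α) (hα1 : α < 1)
    (hs0 : 0 < s) (hs1 : s < 1) {p : V × ℝ} (h1 : p.1 ≠ 0) (h2 : p.2 ≠ 0) :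
    dualSymbol a b α s p ≠ 0 := fun h => by
  have h3 : (dualSymbol a b α s p).re =
      a * (marchaudSymbol α p.2).re + b * (fracLapSymbol s p.1).re := by simp [dualSymbol]
  rw [h, Complex.zero_re] at h3
  have := mul_pos ha (marchaudSymbol_re_pos hα0 hα1 h2)
  have := mul_pos hb (fracLapSymbol_re_pos hs0 hs1 h1)
  linarith

lemma IsSpectralSolution.ae_const_slice [Nontrivial V] (ha : 0 < a) (hb : 0 < b)
    (hα0 : 0 < α) (hα1 : α < 1) (hs0 : 0 < s) (hs1 : s < 1) (hu : HasDecay u)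
    (hsol : IsSpectralSolution a b α s u) {Φ : V → ℂ} (hΦ : IsPuncturedTest Φ) :
    ∃ c : ℂ, ∀ᵐ t, ∫ x, u (x, t) * charIntegral Φ x = c := by
  have hf := hΦ.toIsTest.isDominated
  refine ae_const_of_puncturedTest (hu.integrable_slice hf) fun Ψ hΨ => ?_
  have hT := hΦ.mul_prod hΨ (m := fun p => (dualSymbol a b α s p)⁻¹) fun p h1 h2 => by
    refine ContDiffAt.inv ?_ (dualSymbol_ne_zero ha hb hα0 hα1 hs0 hs1 h1 h2)
    exact (contDiffAt_const.mul
        ((marchaudSymbol_contDiffAt α h2).comp p contDiffAt_snd)).add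
      (contDiffAt_const.mul ((fracLapSymbol_contDiffAt s h1).comp p contDiffAt_fst))
  have hK : ∀ x t, jointIntegral (fun p => dualSymbol a b α s p *
      ((dualSymbol a b α s p)⁻¹ * (Φ p.1 * Ψ p.2))) x t = charIntegral Φ x * charIntegral Ψ t := by
    intro x t
    rw [← jointIntegral_mul]
    congr 1
    ext p
    by_cases h1 : p.1 = 0
    · simp [h1, hΦ.apply_zero]
    by_cases h2 : p.2 = 0
    · simp [h2, hΨ.apply_zero]
    rw [mul_inv_cancel_left₀ (dualSymbol_ne_zero ha hb hα0 hα1 hs0 hs1 h1 h2)]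
  have e : ∀ t, ∫ x, u (x, t) * (charIntegral Φ x * charIntegral Ψ t) =
      (∫ x, u (x, t) * charIntegral Φ x) * charIntegral Ψ t := by
    intro t
    rw [← integral_mul_const]
    simp_rw [mul_assoc]
  have h := hsol _ _ hT hK
  simp_rw [e] at h
  refine h ?_ (hΨ.toIsTest.integrable_mul_charIntegral (hu.integrable_slice hf))
  filter_upwards [hu.ae_integrable_slice hf] with t ht
  simpa only [mul_assoc] using ht.mul_const (charIntegral Ψ t)

lemma IsSpectralSolution.ae_slice_eq_zero [Nontrivial V] (ha : 0 < a) (hb : 0 < b)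
    (hα0 : 0 < α) (hα1 : α < 1) (hs0 : 0 < s) (hs1 : s < 1) (hu : HasDecay u)
    (hsol : IsSpectralSolution a b α s u) {Φ : V → ℂ} (hΦ : IsPuncturedTest Φ) :
    ∀ᵐ t, ∫ x, u (x, t) * charIntegral Φ x = 0 := by
  have hb' : (b : ℂ) ≠ 0 := by exact_mod_cast hb.ne'
  let Φ' : V → ℂ := fun ξ => ((b : ℂ) * fracLapSymbol s ξ)⁻¹ * Φ ξ
  have hΦ' : IsPuncturedTest Φ' := hΦ.mul_left fun ξ hξ =>
    (contDiffAt_const.mul (fracLapSymbol_contDiffAt s hξ)).inv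
      (mul_ne_zero hb' (fracLapSymbol_ne_zero hs0 hs1 hξ))
  obtain ⟨c, hc⟩ := hsol.ae_const_slice ha hb hα0 hα1 hs0 hs1 hu hΦ
  obtain ⟨c', hc'⟩ := hsol.ae_const_slice ha hb hα0 hα1 hs0 hs1 hu hΦ'
  obtain ⟨X, hX, hX1⟩ := exists_schwartz_cutoff (V := ℝ)
  obtain ⟨hA0, hA1, hA2⟩ := charIntegral_marchaudSymbol_mul_cutoff hα0 hα1
  set A := charIntegral (fun τ : ℝ => marchaudSymbol α τ * cutoff τ) with hA
  have hK : ∀ x t, jointIntegral (fun p => dualSymbol a b α s p * (Φ' p.1 * cutoff p.2)) x t =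
      charIntegral Φ' x * (a * A t) + charIntegral Φ x * X t := by
    intro x t
    rw [hX, hA, ← charIntegral_const_mul, ← jointIntegral_mul, ← jointIntegral_mul,
      ← jointIntegral_add]
    · congr 1
      ext p
      by_cases h1 : p.1 = 0
      · simp [h1, hΦ.apply_zero, hΦ'.apply_zero]
      have := fracLapSymbol_ne_zero hs0 hs1 h1
      simp only [dualSymbol, Φ']
      field_simp
    · exact hΦ'.toIsTest.integrable.mul_prod (hA0.const_mul (a : ℂ))
    · exact (hΦ.toIsTest.prod isTest_cutoff).integrable
  have hae : ∀ᵐ t, Integrable (fun x => u (x, t) *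
        (charIntegral Φ' x * (a * A t) + charIntegral Φ x * X t)) ∧
      ∫ x, u (x, t) * (charIntegral Φ' x * (a * A t) + charIntegral Φ x * X t) =
        c' * (a * A t) + c * X t := by
    filter_upwards [hc, hc', hu.ae_integrable_slice hΦ.toIsTest.isDominated,
      hu.ae_integrable_slice hΦ'.toIsTest.isDominated] with t h1 h2 h3 h4
    simp_rw [mul_add, ← mul_assoc (u _)]
    refine ⟨(h4.mul_const _).add (h3.mul_const _), ?_⟩
    rw [integral_add (h4.mul_const _) (h3.mul_const _), integral_mul_const, integral_mul_const,
      h1, h2]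
  have hAi : Integrable fun t => c' * (a * A t) := (hA1.const_mul _).const_mul _
  have hXi : Integrable fun t => c * X t := X.integrable.const_mul _
  have h := hsol _ _ (hΦ'.toIsTest.prod isTest_cutoff) hK (hae.mono fun t ht => ht.1)
    ((hAi.add hXi).congr (hae.mono fun t ht => ht.2.symm))
  rw [integral_congr_ae (hae.mono fun t ht => ht.2), integral_add hAi hXi, integral_const_mul,
    integral_const_mul, integral_const_mul, hA2, hX1] at h
  have hc0 : c = 0 := by simpa using h
  exact hc.mono fun t ht => ht.trans hc0

lemma IsSpectralSolution.ae_eq_time_function [Nontrivial V] (ha : 0 < a) (hb : 0 < b)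
    (hα0 : 0 < α) (hα1 : α < 1) (hs0 : 0 < s) (hs1 : s < 1) (hu : HasDecay u)
    (hsol : IsSpectralSolution a b α s u) :
    ∃ v : ℝ → ℂ, (Integrable fun t => decayWeight t • v t) ∧ ∀ᵐ p : V × ℝ, u p = v p.2 := by
  obtain ⟨X, hX, hX1⟩ := exists_schwartz_cutoff (V := V)
  have hv := hu.integrable_slice X.isDominated
  refine ⟨fun t => ∫ x, u (x, t) * X x, hv, ?_⟩
  set v : ℝ → ℂ := fun t => ∫ x, u (x, t) * X x with hvdef
  have hslice : ∀ g : ℝ → ℂ, IsDominated g →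
      ∀ᵐ x, ∫ t, u (x, t) * g t = ∫ t, v t * g t := by
    intro g hg
    have hw := hu.swap.integrable_slice hg
    simp only [Prod.swap_prod_mk] at hw
    obtain ⟨k, hk⟩ := ae_const_of_puncturedTest hw fun Φ hΦ => by
      rw [hu.integral_slice_comm hΦ.toIsTest.isDominated hg,
        integral_congr_ae (g := fun _ => 0)]
      · simp
      · filter_upwards [hsol.ae_slice_eq_zero ha hb hα0 hα1 hs0 hs1 hu hΦ] with t ht
        rw [ht, zero_mul]
    have h1 := hu.integral_slice_comm X.isDominated hg
    rw [integral_congr_ae (g := fun x => k * X x) (hk.mono fun x hx => by simp only [hx]),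
      integral_const_mul, hX1, mul_one] at h1
    exact hk.mono fun x hx => hx.trans h1
  have hvi : Integrable (fun p : V × ℝ => decayWeight p.1 • (decayWeight p.2 • v p.2))
      ((volume : Measure V).prod volume) := integrable_decayWeight.smul_prod hv
  have hF : Integrable (fun p : V × ℝ => (decayWeight p.1 * decayWeight p.2) • (u p - v p.2))
      ((volume : Measure V).prod volume) := by
    refine (Integrable.sub hu hvi).congr (Filter.Eventually.of_forall fun p => ?_)
    simp only [Pi.sub_apply, smul_sub, mul_smul]
  have hzero := ae_eq_zero_of_integral_prod_eq_zero hF fun A B hA hB => ?_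
  · filter_upwards [hzero] with p hp
    have := (mul_pos (decayWeight_pos p.1) (decayWeight_pos p.2)).ne'
    exact sub_eq_zero.1 ((smul_eq_zero.1 hp).resolve_left this)
  · rw [setIntegral_prod _ hF.integrableOn]
    rw [integral_congr_ae (g := fun _ => 0) (ae_restrict_of_ae ?_), integral_zero]
    have hg := isDominated_indicator (V := ℝ) hB
    have hvg : Integrable fun t => v t * B.indicator (fun t => ((decayWeight t : ℝ) : ℂ)) t := by
      refine (hv.indicator hB).congr (Filter.Eventually.of_forall fun t => ?_)
      by_cases ht : t ∈ B <;> simp [ht, hvdef, mul_comm]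
    filter_upwards [hslice _ hg, hu.swap.ae_integrable_slice hg] with x hx hi
    simp only [Prod.swap_prod_mk] at hi
    have e : ∀ t, B.indicator (fun t => (decayWeight x * decayWeight t) • (u (x, t) - v t)) t =
        decayWeight x • (u (x, t) * B.indicator (fun t => ((decayWeight t : ℝ) : ℂ)) t -
          v t * B.indicator (fun t => ((decayWeight t : ℝ) : ℂ)) t) := by
      intro t
      by_cases ht : t ∈ B
      · simp only [indicator_of_mem ht, Complex.real_smul, Complex.ofReal_mul]
        ring
      · simp [ht]
    rw [← integral_indicator hB, integral_congr_ae (Filter.Eventually.of_forall e), integral_smul,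
      integral_sub hi hvg, hx, sub_self, smul_zero]

lemma IsSpectralSolution.ae_const [Nontrivial V] (ha : 0 < a) (hb : 0 < b)
    (hα0 : 0 < α) (hα1 : α < 1) (hs0 : 0 < s) (hs1 : s < 1) (hu : HasDecay u)
    (hsol : IsSpectralSolution a b α s u) : ∃ c : ℂ, ∀ᵐ p : V × ℝ, u p = c := by
  obtain ⟨v, hv, huv⟩ := hsol.ae_eq_time_function ha hb hα0 hα1 hs0 hs1 hu
  obtain ⟨X, hX, hX1⟩ := exists_schwartz_cutoff (V := V)
  obtain ⟨hB0, hB1, hB2⟩ := charIntegral_fracLapSymbol_mul_cutoff (V := V) hs0 hs1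
  set B := charIntegral (fun ξ : V => fracLapSymbol s ξ * cutoff ξ) with hB
  have ha' : (a : ℂ) ≠ 0 := by exact_mod_cast ha.ne'
  have hslice : ∀ᵐ t, ∀ᵐ x : V, u (x, t) = v t := by
    have h1 : ∀ᵐ p ∂((volume : Measure V).prod volume), u p = v p.2 := huv
    have h2 := (Measure.measurePreserving_swap (μ := (volume : Measure ℝ))
      (ν := (volume : Measure V))).quasiMeasurePreserving.ae h1
    exact Measure.ae_ae_of_ae_prod h2
  obtain ⟨c, hc⟩ := ae_const_of_puncturedTest hv fun Ψ hΨ => by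
    let Ψ' : ℝ → ℂ := fun τ => ((a : ℂ) * marchaudSymbol α τ)⁻¹ * Ψ τ
    have hΨ' : IsPuncturedTest Ψ' := hΨ.mul_left fun τ hτ =>
      (contDiffAt_const.mul (marchaudSymbol_contDiffAt α hτ)).inv
        (mul_ne_zero ha' (marchaudSymbol_ne_zero hα0 hα1 hτ))
    have hK : ∀ x t, jointIntegral (fun p : V × ℝ =>
        dualSymbol a b α s p * (cutoff p.1 * Ψ' p.2)) x t =
        X x * charIntegral Ψ t + b * B x * charIntegral Ψ' t := by
      intro x t
      rw [hX, hB, ← charIntegral_const_mul (b : ℂ) (fun ξ : V => fracLapSymbol s ξ * cutoff ξ),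
        ← jointIntegral_mul, ← jointIntegral_mul, ← jointIntegral_add]
      · congr 1
        ext p
        by_cases h1 : p.2 = 0
        · simp [h1, hΨ.apply_zero, hΨ'.apply_zero]
        have := marchaudSymbol_ne_zero hα0 hα1 h1
        simp only [dualSymbol, Ψ']
        field_simp
      · exact (isTest_cutoff.prod hΨ.toIsTest).integrable
      · exact (hB0.const_mul (b : ℂ)).mul_prod hΨ'.toIsTest.integrable
    have hae : ∀ᵐ t, Integrable (fun x => u (x, t) *
          (X x * charIntegral Ψ t + b * B x * charIntegral Ψ' t)) ∧
        ∫ x, u (x, t) * (X x * charIntegral Ψ t + b * B x * charIntegral Ψ' t) =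
          v t * charIntegral Ψ t := by
      filter_upwards [hslice] with t ht
      have hi1 : Integrable fun x => X x * charIntegral Ψ t := X.integrable.mul_const _
      have hi2 : Integrable fun x => b * B x * charIntegral Ψ' t :=
        (hB1.const_mul _).mul_const _
      have e : (fun x => u (x, t) * (X x * charIntegral Ψ t + b * B x * charIntegral Ψ' t))
          =ᵐ[volume] fun x => v t * (X x * charIntegral Ψ t + b * B x * charIntegral Ψ' t) :=
        ht.mono fun x hx => by simp only [hx]
      refine ⟨((hi1.add hi2).const_mul (v t)).congr e.symm, ?_⟩
      rw [integral_congr_ae e, integral_const_mul, integral_add hi1 hi2, integral_mul_const,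
        integral_mul_const, integral_const_mul, hX1, hB2]
      ring
    have h := hsol _ _ (isTest_cutoff.prod hΨ'.toIsTest) hK (hae.mono fun t ht => ht.1)
      ((hΨ.toIsTest.integrable_mul_charIntegral hv).congr (hae.mono fun t ht => ht.2.symm))
    rwa [integral_congr_ae (hae.mono fun t ht => ht.2)] at h
  refine ⟨c, ?_⟩
  have h1 : ∀ᵐ p ∂((volume : Measure V).prod volume), v p.2 = c :=
    Measure.quasiMeasurePreserving_snd.ae hc
  filter_upwards [huv, h1] with p h2 h3
  exact h2.trans h3

end Liouville

lemma one_add_rpow_le {r p : ℝ} (hr : 0 ≤ r) (hp : 0 ≤ p) {m : ℕ} (hpm : p ≤ m) :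
    1 + r ^ p ≤ 2 * (1 + r) ^ m := by
  have h1 : r ^ p ≤ (1 + r) ^ p := Real.rpow_le_rpow hr (by linarith) hp
  have h2 : (1 + r) ^ p ≤ (1 + r) ^ m := by
    rw [← Real.rpow_natCast]
    exact Real.rpow_le_rpow_of_exponent_le (by linarith) hpm
  have h3 : 1 ≤ (1 + r) ^ m := one_le_pow₀ (by linarith)
  linarith

lemma decayWeight_le_inv_one_add_rpow {V : Type*} [NormedAddCommGroup V] [InnerProductSpace ℝ V]
    {p : ℝ} (hp : 0 ≤ p) (hpm : p ≤ Module.finrank ℝ V + 1) (x : V) :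
    decayWeight x ≤ 2 * (1 + ‖x‖ ^ p)⁻¹ := by
  have h := one_add_rpow_le (norm_nonneg x) hp (m := Module.finrank ℝ V + 1) (by exact_mod_cast hpm)
  have h0 : 0 < 1 + ‖x‖ ^ p := by positivity
  rw [decayWeight, ← div_eq_mul_inv, inv_le_comm₀ (by positivity) (by positivity), inv_div,
    div_le_iff₀ two_pos, mul_comm]
  exact h

lemma hasDecay_of_integrable_weight {n : ℕ} {α s : ℝ} (hα0 : 0 < α) (hα1 : α < 1) (hs0 : 0 < s)
    (hs1 : s ≤ 1 / 2) {u : EuclideanSpace ℝ (Fin n) × ℝ → ℝ} (hu_loc : LocallyIntegrable u)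
    (hu_space : Integrable (fun p : EuclideanSpace ℝ (Fin n) × ℝ =>
      |u p| / ((1 + ‖p.1‖ ^ ((n : ℝ) + 2 * s)) * (1 + |p.2| ^ (1 + α))))) :
    HasDecay fun p => (u p : ℂ) := by
  refine (hu_space.const_mul 4).mono' ?_ (Filter.Eventually.of_forall fun p => ?_)
  · have h1 : Continuous fun p : EuclideanSpace ℝ (Fin n) × ℝ =>
        decayWeight p.1 * decayWeight p.2 :=
      (continuous_decayWeight.comp continuous_fst).mul (continuous_decayWeight.comp continuous_snd)
    exact h1.aestronglyMeasurable.smul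
      (Complex.continuous_ofReal.comp_aestronglyMeasurable hu_loc.aestronglyMeasurable)
  · have h1 : decayWeight p.1 ≤ 2 * (1 + ‖p.1‖ ^ ((n : ℝ) + 2 * s))⁻¹ :=
      decayWeight_le_inv_one_add_rpow (by positivity)
        (by rw [finrank_euclideanSpace_fin]; linarith) p.1
    have h2 : decayWeight p.2 ≤ 2 * (1 + |p.2| ^ (1 + α))⁻¹ :=
      decayWeight_le_inv_one_add_rpow (by positivity) (by simp; linarith) p.2
    have h3 : ‖(u p : ℂ)‖ = |u p| := by simp
    rw [norm_smul, h3, Real.norm_of_nonneg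
      (mul_nonneg (decayWeight_pos _).le (decayWeight_pos _).le)]
    calc decayWeight p.1 * decayWeight p.2 * |u p|
        ≤ (2 * (1 + ‖p.1‖ ^ ((n : ℝ) + 2 * s))⁻¹) * (2 * (1 + |p.2| ^ (1 + α))⁻¹) * |u p| :=
          mul_le_mul_of_nonneg_right
            (mul_le_mul h1 h2 (decayWeight_pos _).le ((decayWeight_pos _).le.trans h1))
            (abs_nonneg _)
      _ = _ := by rw [div_eq_mul_inv, mul_inv]; ring

lemma abs_Gamma_neg_pos {α : ℝ} (hα0 : 0 < α) (hα1 : α < 1) : 0 < |Real.Gamma (-α)| := by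
  refine abs_pos.2 (Real.Gamma_ne_zero fun m h => ?_)
  have h' : α = m := neg_injective h
  subst h'
  have h0 : 0 < m := by exact_mod_cast hα0
  have h1 : m < 1 := by exact_mod_cast hα1
  omega

lemma Calpha_pos {α : ℝ} (hα0 : 0 < α) (hα1 : α < 1) : 0 < Calpha α :=
  one_div_pos.2 (abs_Gamma_neg_pos hα0 hα1)

lemma Cns_pos (n : ℕ) {s : ℝ} (hs0 : 0 < s) (hs1 : s < 1) : 0 < Cns n s := by
  have h1 := abs_Gamma_neg_pos hs0 hs1
  have h2 : 0 < Real.Gamma ((n : ℝ) / 2 + s) := Real.Gamma_pos_of_pos (by positivity)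
  unfold Cns
  positivity

/-- Liouville theorem for `∂_t^α u + (-Δ)^s u = 0` in `ℝⁿ × ℝ` for
`0 < s ≤ 1/2`: every distributional solution `u ∈ 𝓛_{2s,α}(ℝⁿ×ℝ)` is a.e. constant. -/
theorem liouville_dual_fractional_small_s
    (n : ℕ) (hn : 2 ≤ n) (α s : ℝ) (hα0 : 0 < α) (hα1 : α < 1)
    (hs0 : 0 < s) (hs1 : s ≤ 1 / 2)
    (u : EuclideanSpace ℝ (Fin n) × ℝ → ℝ)
    (hu_loc : LocallyIntegrable u)
    (hu_space : Integrable (fun p : EuclideanSpace ℝ (Fin n) × ℝ =>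
      |u p| / ((1 + ‖p.1‖ ^ ((n : ℝ) + 2 * s)) * (1 + |p.2| ^ (1 + α)))))
    (hu_sol : ∀ φ : SchwartzMap (EuclideanSpace ℝ (Fin n) × ℝ) ℝ,
      ∫ t : ℝ, ∫ x : EuclideanSpace ℝ (Fin n),
        u (x, t) * (marchaudRight α (⇑φ) x t + fracLap s (⇑φ) x t) = 0) :
    ∃ c : ℝ, ∀ᵐ p : EuclideanSpace ℝ (Fin n) × ℝ ∂volume, u p = c := by
  have hs1' : s < 1 := by linarith
  have : NeZero n := ⟨by omega⟩
  have hsol : IsSpectralSolution (Calpha α) (Cns n s / 2) α s fun p => (u p : ℂ) :=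
    fun Φ K hΦ hK h1 h2 => integral_eq_zero_of_solution hα0 hα1 hs0 hs1' hu_sol hΦ hK h1 h2
  obtain ⟨c, hc⟩ := hsol.ae_const (Calpha_pos hα0 hα1) (half_pos (Cns_pos n hs0 hs1')) hα0 hα1
    hs0 hs1' (hasDecay_of_integrable_weight hα0 hα1 hs0 hs1 hu_loc hu_space)
  exact ⟨c.re, hc.mono fun p hp => by rw [← hp, Complex.ofReal_re]⟩
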